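/- Let f ∈ O_3 be an isolated singularity with Γ^2(f) \ E_f ≠ ∅. Then for every axis OX_i (i=1,2,3) there exists an unexceptional 2-dimensional face S_i ∈ Γ^2(f) \ E_f such that at least one of the following holds: (i) some vertex W of S_i lies on the axis OX_i; (ii) there exist distinct j,k ∈ {1,2,3}\{i} and vertices W ∈ OX_iX_j at distance 1 from OX_i and Y ∈ OX_iX_k such that the segment [W,Y] is an edge of S_i. -/

import Mathlib

open Finset Filter Topology

/-- The `i`-th partial derivative of `f`. -/
noncomputable def pder {n : ℕ} (i : Fin n) (f : (Fin n → ℂ) → ℂ) : (Fin n → ℂ) → ℂ :=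
  fun z => fderiv ℂ f z (Pi.single i 1)

/-- The iterated partial derivative `∂^ν f` for a multi-index `ν`. -/
noncomputable def mder {n : ℕ} (ν : Fin n → ℕ) (f : (Fin n → ℂ) → ℂ) : (Fin n → ℂ) → ℂ :=
  ((List.finRange n).map fun i => (pder i)^[ν i]).foldr (fun g acc => g acc) f

/-- The support of the Taylor expansion of `f` at `0`. -/
def NSupp {n : ℕ} (f : (Fin n → ℂ) → ℂ) : Set (Fin n → ℕ) :=
  {ν | mder ν f 0 ≠ 0}

/-- The Taylor coefficient `a_ν` of `f` at `0`. -/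
noncomputable def coeffOf {n : ℕ} (f : (Fin n → ℂ) → ℂ) (ν : Fin n → ℕ) : ℂ :=
  mder ν f 0 / ((∏ i, (ν i).factorial : ℕ) : ℂ)

/-- The Newton diagram `Γ₊(f)`: the convex hull of `⋃_{ν ∈ supp f} (ν + ℝ₊ⁿ)`. -/
def NDiag {n : ℕ} (f : (Fin n → ℂ) → ℂ) : Set (Fin n → ℝ) :=
  convexHull ℝ {x | ∃ ν ∈ NSupp f, ∀ i, (ν i : ℝ) ≤ x i}

/-- `l(u, A) = inf {⟨u, v⟩ : v ∈ A}`. -/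
noncomputable def ell {n : ℕ} (u : Fin n → ℝ) (A : Set (Fin n → ℝ)) : ℝ :=
  sInf ((fun v => ∑ i, u i * v i) '' A)

/-- The face `Δ(u, A) = {v ∈ A : ⟨u, v⟩ = l(u, A)}`. -/
def faceOf {n : ℕ} (u : Fin n → ℝ) (A : Set (Fin n → ℝ)) : Set (Fin n → ℝ) :=
  {v | v ∈ A ∧ ∑ i, u i * v i = ell u A}

/-- `S` is a compact face of the Newton diagram of `f` (member of the Newton boundary). -/
def IsCompactFace {n : ℕ} (f : (Fin n → ℂ) → ℂ) (S : Set (Fin n → ℝ)) : Prop :=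
  ∃ u : Fin n → ℝ, (∀ i, 0 < u i) ∧ S = faceOf u (NDiag f)

/-- The dimension of a face, as the rank of the direction of its affine span. -/
noncomputable def faceDim {n : ℕ} (S : Set (Fin n → ℝ)) : ℕ :=
  Module.finrank ℝ (affineSpan ℝ S).direction

/-- `Γ^k(f)`: the `k`-dimensional compact faces of the Newton boundary of `f`. -/
def GammaK {n : ℕ} (f : (Fin n → ℂ) → ℂ) (k : ℕ) : Set (Set (Fin n → ℝ)) :=
  {S | IsCompactFace f S ∧ faceDim S = k}

/-- The quasihomogeneous polynomial `f_S = Σ_{ν ∈ S} a_ν z^ν`. -/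
noncomputable def facePoly {n : ℕ} (f : (Fin n → ℂ) → ℂ) (S : Set (Fin n → ℝ)) :
    (Fin n → ℂ) → ℂ :=
  fun z => ∑' ν : {ν : Fin n → ℕ // (fun i => (ν i : ℝ)) ∈ S}, coeffOf f ν.1 * ∏ i, z i ^ ν.1 i

/-- `f` is nondegenerate in the Kouchnirenko sense. -/
def Nondeg {n : ℕ} (f : (Fin n → ℂ) → ℂ) : Prop :=
  ∀ S, IsCompactFace f S →
    ¬∃ z : Fin n → ℂ, (∀ i, z i ≠ 0) ∧ ∀ i, pder i (facePoly f S) z = 0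

/-- `f` is a singularity: a nonzero holomorphic germ with `f 0 = 0`, `∇f 0 = 0`. -/
def IsSing {n : ℕ} (f : (Fin n → ℂ) → ℂ) : Prop :=
  AnalyticAt ℂ f 0 ∧ (¬∀ᶠ z in 𝓝 0, f z = 0) ∧ f 0 = 0 ∧ ∀ i, pder i f 0 = 0

/-- `f` is an isolated singularity: `∇f` has an isolated zero at `0`. -/
def IsIsolSing {n : ℕ} (f : (Fin n → ℂ) → ℂ) : Prop :=
  IsSing f ∧ ∃ r > (0 : ℝ), ∀ z : Fin n → ℂ, ‖z‖ < r → z ≠ 0 → ∃ i, pder i f z ≠ 0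

/-- Euclidean distance of a point of `ℝ³` to the `i`-th coordinate axis. -/
noncomputable def distAxis (i : Fin 3) (W : Fin 3 → ℝ) : ℝ :=
  Real.sqrt (∑ j ∈ Finset.univ.erase i, (W j) ^ 2)

/-- The vertices (0-dimensional compact faces of the Newton boundary of `f`) lying in `S`. -/
def vtxOf (f : (Fin 3 → ℂ) → ℂ) (S : Set (Fin 3 → ℝ)) : Set (Fin 3 → ℝ) :=
  {A | IsCompactFace f {A} ∧ A ∈ S}

/-- `S` is an exceptional face with respect to the axis `OX_i`: one of its vertices `W` is
at distance `1` from `OX_i` and the remaining vertices constitute a `1`-dimensional face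
lying in a coordinate plane containing `OX_i`. -/
def ExcWrt (f : (Fin 3 → ℂ) → ℂ) (i : Fin 3) (S : Set (Fin 3 → ℝ)) : Prop :=
  ∃ W ∈ vtxOf f S, distAxis i W = 1 ∧
    ∃ T ∈ GammaK f 1, (∃ j, j ≠ i ∧ T ⊆ {x : Fin 3 → ℝ | x j = 0}) ∧
      vtxOf f T = vtxOf f S \ {W}

/-- The set `E_f` of exceptional 2-dimensional faces of `f`. -/
def Ef (f : (Fin 3 → ℂ) → ℂ) : Set (Set (Fin 3 → ℝ)) :=
  {S | S ∈ GammaK f 2 ∧ ∃ i, ExcWrt f i S}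

/-- `I` is the segment `I_j^m` of the family `𝒥` for the given `m`. -/
def segJ (m : ℕ) (I : Set (Fin 3 → ℝ)) : Prop :=
  I = segment ℝ ![0, 1, 1] ![(m : ℝ), 0, 0] ∨
  I = segment ℝ ![1, 0, 1] ![0, (m : ℝ), 0] ∨
  I = segment ℝ ![1, 1, 0] ![0, 0, (m : ℝ)]

/-- `I` belongs to the family `𝒥 = {I_j^k : j = 1,2,3, k ≥ 2}`. -/
def InJ (I : Set (Fin 3 → ℝ)) : Prop := ∃ m : ℕ, 2 ≤ m ∧ segJ m I

/-!
Since `f` is an isolated singularity, its set `M` of minimal exponents is a finite antichain of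
orders at least two with an exponent on or next to every axis (otherwise the gradient vanishes
along the axis) and one in every coordinate plane (otherwise `x_j ∣ f`, and the gradient vanishes on
the curve `x_j = ∂f/∂x_j = 0`, since a holomorphic function of two variables has no isolated zeros).
This is `exists_cfg`; it is the only use of analysis.

For positive weights `u`, the face of the Newton diagram selected by `u` is the convex hull of the
exponents of `M` of least `u`-weight (`Gen.face_eq`), and every face is the hull of its vertices
(`Gen.hull_vtx`). Hence dimension, vertices, edges and exceptionality can be read off the finite set
`mnSet M u`, and the theorem becomes the combinatorial statement `goal_of_cfg` about `M`.

The combinatorial statement is proved by rotating supporting planes: a weight is moved along a ray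
that keeps an edge (or a vertex) of a face fixed, until a new exponent of `M` is met (`rotate`).
If no exponent of `M` is on the axis `OX_i`, there is one, `W`, at distance one from it; rotating
around `W` produces either an edge from `W` to the opposite coordinate plane lying on an
unexceptional face, or an exceptional face with `W` as an apex (`fan`, `fan_step`). If `Z ∈ M` is on
the axis, the extreme faces at `Z` are examined in the same way. The configurations in which each
candidate is exceptional force all of the Newton boundary to consist of exceptional faces
(`no_cone`, `no_edge`), contrary to the existence of one unexceptional face. That face enters
through `Wit`.
-/

/-! ### Finite antichains of exponents and their weighted minima -/

/-- The pairing `⟨u, a⟩` of a weight `u` with an exponent `a`. -/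
def dt (u : Fin 3 → ℝ) (a : Fin 3 → ℕ) : ℝ := ∑ i, u i * (a i : ℝ)

/-- The elements of `M` of least weight with respect to `u`, i.e. the exponents lying on the
face selected by `u`. -/
def mnSet (M : Set (Fin 3 → ℕ)) (u : Fin 3 → ℝ) : Set (Fin 3 → ℕ) :=
  {a | a ∈ M ∧ ∀ b ∈ M, dt u a ≤ dt u b}

/-- The properties of the set `M` of minimal exponents of an isolated singularity on which the
combinatorial argument rests: order at least two, a point on or next to each axis, and a point
on each coordinate plane. -/
structure Cfg (M : Set (Fin 3 → ℕ)) : Prop where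
  fin : M.Finite
  anti : ∀ a ∈ M, ∀ b ∈ M, (∀ l, a l ≤ b l) → a = b
  deg : ∀ a ∈ M, 2 ≤ a 0 + a 1 + a 2
  axis : ∀ i, ∃ a ∈ M, ∀ j k, i ≠ j → i ≠ k → j ≠ k → a j + a k ≤ 1
  plane : ∀ j, ∃ a ∈ M, a j = 0

/-- Three pairwise distinct indices. -/
def Tri (i j k : Fin 3) : Prop := i ≠ j ∧ i ≠ k ∧ j ≠ k

/-- Combinatorial form of exceptionality of the face selected by `u`: one exponent `C` on it has
`C j = 1`, `C k = 0`, and all others lie in the plane `x_j = 0`. -/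
def CExc (M : Set (Fin 3 → ℕ)) (u : Fin 3 → ℝ) : Prop :=
  ∃ i j k, Tri i j k ∧ ∃ C ∈ mnSet M u, C j = 1 ∧ C k = 0 ∧ ∀ a ∈ mnSet M u, a ≠ C → a j = 0

/-- `u` selects an unexceptional face that lies in no coordinate plane. -/
structure Wit (M : Set (Fin 3 → ℕ)) (u : Fin 3 → ℝ) : Prop where
  pos : ∀ l, 0 < u l
  nexc : ¬ CExc M u
  flat : ∀ j, ∃ a ∈ mnSet M u, a j ≠ 0

/-- The exponents of least `u`-weight are not all collinear: an affine form vanishes at two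
distinct ones and not at a third. -/
def NonCol (M : Set (Fin 3 → ℕ)) (u : Fin 3 → ℝ) : Prop :=
  ∃ A ∈ mnSet M u, ∃ B ∈ mnSet M u, ∃ C ∈ mnSet M u, A ≠ B ∧
    ∃ (d : Fin 3 → ℝ) (e : ℝ), dt d A = e ∧ dt d B = e ∧ dt d C ≠ e

/-- The combinatorial form of the conclusion for the axis `i`. -/
def Goal (M : Set (Fin 3 → ℕ)) (i : Fin 3) : Prop :=
  ∃ u : Fin 3 → ℝ, (∀ l, 0 < u l) ∧ ¬ CExc M u ∧ NonCol M u ∧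
    ((∃ W ∈ mnSet M u, ∀ j, j ≠ i → W j = 0) ∨
      ∃ j k, Tri i j k ∧ ∃ W ∈ mnSet M u, ∃ Y ∈ mnSet M u,
        W j = 1 ∧ W k = 0 ∧ Y j = 0 ∧ 1 ≤ Y k ∧
        ∃ v : Fin 3 → ℝ, (∀ l, 0 < v l) ∧ mnSet M v = {W, Y})

/-- A linear form in the coordinates `i`, `j`, `k`. -/
def lf (i j k : Fin 3) (x y z : ℝ) (a : Fin 3 → ℕ) : ℝ := x * a i + y * a j + z * a k

/-- The weight with value `x` at `i`, `y` at `j`, and `z` at the third index. -/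
def tri (i j : Fin 3) (x y z : ℝ) : Fin 3 → ℝ := fun l => if l = i then x else if l = j then y else z

lemma Tri.rot {i j k : Fin 3} (h : Tri i j k) : Tri i k j := ⟨h.2.1, h.1, h.2.2.symm⟩

lemma Tri.cases {i j k : Fin 3} (h : Tri i j k) (l : Fin 3) : l = i ∨ l = j ∨ l = k := by
  obtain ⟨h1, h2, h3⟩ := h
  omega

lemma Tri.exists (i : Fin 3) : ∃ j k, Tri i j k := by
  unfold Tri; revert i; decide

lemma Tri.sum {β : Type*} [AddCommMonoid β] {i j k : Fin 3} (h : Tri i j k) (g : Fin 3 → β) :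
    ∑ l, g l = g i + g j + g k := by
  have hu : (Finset.univ : Finset (Fin 3)) = {i, j, k} := by
    ext l; simpa using h.cases l
  rw [hu, Finset.sum_insert (by simp [h.1, h.2.1]), Finset.sum_insert (by simp [h.2.2]),
    Finset.sum_singleton, add_assoc]

lemma tri_pos {i j : Fin 3} {x y z : ℝ} (hx : 0 < x) (hy : 0 < y) (hz : 0 < z) (l : Fin 3) :
    0 < tri i j x y z l := by
  unfold tri; split_ifs <;> assumption

lemma dt_tri {i j k : Fin 3} (h : Tri i j k) (x y z : ℝ) (a : Fin 3 → ℕ) :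
    dt (tri i j x y z) a = lf i j k x y z a := by
  obtain ⟨h1, h2, h3⟩ := h
  rw [dt, Tri.sum ⟨h1, h2, h3⟩]
  simp [tri, lf, h1.symm, h2.symm, h3.symm]

lemma dt_eq_lf {i j k : Fin 3} (h : Tri i j k) (u : Fin 3 → ℝ) (a : Fin 3 → ℕ) :
    dt u a = lf i j k (u i) (u j) (u k) a := h.sum _

lemma mem_mnSet_iff {M : Set (Fin 3 → ℕ)} {u : Fin 3 → ℝ} {l : ℝ} {w : Fin 3 → ℕ}
    (hmin : ∀ a ∈ M, l ≤ dt u a) (hw : w ∈ M) (hwl : dt u w = l) (a : Fin 3 → ℕ) :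
    a ∈ mnSet M u ↔ a ∈ M ∧ dt u a = l := by
  constructor
  · rintro ⟨ha, hb⟩
    exact ⟨ha, le_antisymm (hwl ▸ hb w hw) (hmin a ha)⟩
  · rintro ⟨ha, hb⟩
    exact ⟨ha, fun b hbM => hb ▸ hmin b hbM⟩

lemma mem_mnSet_tri {M : Set (Fin 3 → ℕ)} {i j k : Fin 3} (h : Tri i j k) {x y z l : ℝ}
    {w : Fin 3 → ℕ} (hmin : ∀ a ∈ M, l ≤ lf i j k x y z a) (hw : w ∈ M)
    (hwl : lf i j k x y z w = l) (a : Fin 3 → ℕ) :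
    a ∈ mnSet M (tri i j x y z) ↔ a ∈ M ∧ lf i j k x y z a = l := by
  rw [mem_mnSet_iff (l := l) (w := w) (by simpa only [dt_tri h] using hmin) hw
    (by rw [dt_tri h]; exact hwl), dt_tri h]

namespace Cfg

variable {M : Set (Fin 3 → ℕ)}

lemma anti3 (hM : Cfg M) {i j k : Fin 3} (h : Tri i j k) {a b : Fin 3 → ℕ} (ha : a ∈ M)
    (hb : b ∈ M) (h1 : a i ≤ b i) (h2 : a j ≤ b j) (h3 : a k ≤ b k) : a = b := by
  refine hM.anti a ha b hb fun l => ?_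
  rcases h.cases l with rfl | rfl | rfl <;> assumption

lemma deg3 (hM : Cfg M) {i j k : Fin 3} (h : Tri i j k) {a : Fin 3 → ℕ} (ha : a ∈ M) :
    2 ≤ a i + a j + a k := by
  rw [← h.sum, Fin.sum_univ_three]; exact hM.deg a ha

end Cfg

/-- If all exponents but one, `C`, lie in the plane `x_j = 0`, and `C` is at distance one from an
axis of that plane, then every face off the coordinate planes is exceptional with apex `C`. -/
lemma no_cone {M : Set (Fin 3 → ℕ)} {u : Fin 3 → ℝ} (hu : Wit M u) {i j k : Fin 3}
    (h : Tri i j k) {C : Fin 3 → ℕ} (hj : C j = 1) (hk : C k = 0)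
    (hC : ∀ a ∈ M, a ≠ C → a j = 0) : False := by
  obtain ⟨a, ha, haj⟩ := hu.flat j
  have haC : a = C := by
    by_contra hne
    exact haj (hC a ha.1 hne)
  subst haC
  exact hu.nexc ⟨i, j, k, h, a, ha, hj, hk, fun b hb => hC b hb.1⟩

/-- Suppose `C = e_j + e_k` and an exponent `Z` on the axis `i` span an edge, in the weak sense
that some weight attains its minimum at both and at no other point off `x_k = 0`. The plane
`x_j = x_k` then separates the remaining exponents, so no face meets both sides, and every face
is a cone with apex `C`, hence exceptional. -/
lemma no_edge {M : Set (Fin 3 → ℕ)} (hM : Cfg M) {u : Fin 3 → ℝ} (hu : Wit M u) {i j k : Fin 3}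
    (h : Tri i j k) {C Z : Fin 3 → ℕ} (hCM : C ∈ M) (hZM : Z ∈ M) (hCi : C i = 0) (hCj : C j = 1)
    (hCk : C k = 1) (hZj : Z j = 0) (hZk : Z k = 0) {w₁ w₂ w₃ l : ℝ} (hw₁ : 0 < w₁)
    (hmin : ∀ a ∈ M, l ≤ lf i j k w₁ w₂ w₃ a) (hC : lf i j k w₁ w₂ w₃ C = l)
    (hZ : lf i j k w₁ w₂ w₃ Z = l)
    (hex : ∀ a ∈ M, lf i j k w₁ w₂ w₃ a = l → a ≠ C → a k = 0) : False := by
  have key : (∀ a ∈ mnSet M u, a ≠ C → a k = 0) ∨ (∀ a ∈ mnSet M u, a ≠ C → a j = 0) := by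
    by_contra hcon
    push Not at hcon
    obtain ⟨⟨B, hB, hBC, hBk⟩, A, hA, hAC, hAj⟩ := hcon
    have hBj : B j = 0 := by
      by_contra hne
      exact hBC (hM.anti3 h hCM hB.1 (by omega) (by omega) (by omega)).symm
    have hAk : A k = 0 := by
      by_contra hne
      exact hAC (hM.anti3 h hCM hA.1 (by omega) (by omega) (by omega)).symm
    have hui := hu.pos i
    have huj := hu.pos j
    have huk := hu.pos k
    have hAB : dt u A = dt u B := le_antisymm (hA.2 B hB.1) (hB.2 A hA.1)
    have hAleC := hA.2 C hCM
    have hAleZ := hA.2 Z hZM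
    have hwA := hmin A hA.1
    have hwB : l < lf i j k w₁ w₂ w₃ B :=
      lt_of_le_of_ne (hmin B hB.1) fun he => hBk (hex B hB.1 he.symm hBC)
    have hb : (1 : ℝ) ≤ A j := by exact_mod_cast Nat.one_le_iff_ne_zero.2 hAj
    have hc : (1 : ℝ) ≤ B k := by exact_mod_cast Nat.one_le_iff_ne_zero.2 hBk
    have ha : (0 : ℝ) ≤ A i := Nat.cast_nonneg _
    have ha' : (0 : ℝ) ≤ B i := Nat.cast_nonneg _
    simp only [dt_eq_lf h, lf, hCi, hCj, hCk, hZj, hZk, hAk, hBj, Nat.cast_zero, Nat.cast_one,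
      mul_zero, mul_one, add_zero, zero_add] at *
    generalize (A j : ℝ) = b at *
    generalize (B k : ℝ) = c at *
    generalize (A i : ℝ) = a at *
    generalize (B i : ℝ) = a' at *
    generalize (Z i : ℝ) = m at *
    generalize u i = v₁ at *
    generalize u j = v₂ at *
    generalize u k = v₃ at *
    set L := v₁ * a + v₂ * b with hL
    have hLpos : 0 < L := by nlinarith [mul_nonneg hui.le ha, mul_pos huj (lt_of_lt_of_le one_pos hb)]
    -- The point of the segment `AB` on the plane `x_j = x_k`, scaled by `b + c`.
    have h1 : w₁ * ((b + c - b * c) * m) < w₁ * (c * a + b * a') := by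
      have e1 := mul_le_mul_of_nonneg_left hwA (by linarith : (0 : ℝ) ≤ c)
      have e2 := mul_lt_mul_of_pos_left hwB (by linarith : (0 : ℝ) < b)
      have e3 : b * c * (w₂ + w₃) = b * c * (w₁ * m) := by rw [hC, hZ]
      rw [← hZ] at e1 e2
      linarith
    have h2 := lt_of_mul_lt_mul_left h1 hw₁.le
    have h3 : (b + c) * L = v₁ * (c * a + b * a') + b * c * (v₂ + v₃) := by
      have : b * L = b * (v₁ * a' + v₃ * c) := by rw [hAB]
      rw [add_mul, this, hL]; ring
    have h4 : b * c * L ≤ b * c * (v₂ + v₃) :=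
      mul_le_mul_of_nonneg_left hAleC (by positivity)
    rcases le_total (b * c) (b + c) with h5 | h5
    · have h6 := mul_lt_mul_of_pos_left h2 hui
      have h7 := mul_le_mul_of_nonneg_left hAleZ (by linarith : 0 ≤ b + c - b * c)
      nlinarith
    · have h6 := mul_le_mul_of_nonneg_right h5 hLpos.le
      have h7 : 0 ≤ (c * a + b * a') := by positivity
      rcases eq_or_lt_of_le h5 with h8 | h8
      · have : 0 < c * a + b * a' := by
          have : (b + c - b * c) * m = 0 := by rw [h8]; ring
          linarith
        have := mul_pos hui this
        linarith
      · have h9 := mul_lt_mul_of_pos_right h8 hLpos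
        have := mul_nonneg hui.le h7
        linarith
  have hfin : ∀ {p q : Fin 3}, Tri p q i → C q = 1 → (∀ a ∈ mnSet M u, a ≠ C → a q = 0) → False := by
    intro p q hpq hq hall
    obtain ⟨a, ha, haq⟩ := hu.flat q
    have haC : a = C := by
      by_contra hne
      exact haq (hall a ha hne)
    subst haC
    exact hu.nexc ⟨p, q, i, hpq, a, ha, hq, hCi, hall⟩
  rcases key with hk | hj
  · exact hfin ⟨h.2.2, h.1.symm, h.2.1.symm⟩ hCk hk
  · exact hfin ⟨h.2.2.symm, h.2.1.symm, h.1.symm⟩ hCj hj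

/-- Rotating the form `φ` in the direction `ψ` until it first meets a point where `ψ < 0`. -/
lemma rotate {M : Set (Fin 3 → ℕ)} (hfin : M.Finite) (φ ψ : (Fin 3 → ℕ) → ℝ)
    (hφ : ∀ a ∈ M, 0 ≤ φ a) (hψ : ∃ a ∈ M, ψ a < 0) :
    ∃ τ : ℝ, 0 ≤ τ ∧ (∀ a ∈ M, 0 ≤ φ a + τ * ψ a) ∧ ∃ a ∈ M, ψ a < 0 ∧ φ a + τ * ψ a = 0 := by
  obtain ⟨b, ⟨hbM, hb⟩, hbmin⟩ := Set.exists_min_image {a | a ∈ M ∧ ψ a < 0}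
    (fun a => φ a / -ψ a) (hfin.subset fun a ha => ha.1) hψ
  have hb' : 0 < -ψ b := by linarith
  have hτ : 0 ≤ φ b / -ψ b := div_nonneg (hφ b hbM) hb'.le
  refine ⟨φ b / -ψ b, hτ, fun a ha => ?_, b, hbM, hb, ?_⟩
  · rcases lt_or_ge (ψ a) 0 with h | h
    · have h1 := hbmin a ⟨ha, h⟩
      have h2 : 0 < -ψ a := by linarith
      change φ b / -ψ b ≤ φ a / -ψ a at h1
      rw [le_div_iff₀ h2] at h1
      linarith
    · have := hφ a ha
      positivity
  · have : ψ b ≠ 0 := hb.ne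
    field_simp
    ring

/-! ### The fan of faces around an exponent next to an axis -/

/-- The fan around `W = p e_i + e_j`. The weight `n` selects a face whose points other than `W` lie
in the plane `x_j = 0`. Following the edges that join `W` to this plane, the last one `[W, Y]`
borders a face, selected by `u`, that contains a further exponent `V` off the plane; `v` selects
the edge itself. A last edge exists because otherwise all faces would be cones with apex `W`. -/
lemma fan {M : Set (Fin 3 → ℕ)} (hM : Cfg M) {u₀ : Fin 3 → ℝ} (hu₀ : Wit M u₀) {i j k : Fin 3}
    (h : Tri i j k) {W : Fin 3 → ℕ} (hWM : W ∈ M) (hWj : W j = 1) (hWk : W k = 0)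
    {n₁ n₂ n₃ l : ℝ} (hn₁ : 0 ≤ n₁) (hn₂ : 0 < n₂) (hn₃ : 0 < n₃)
    (hmin : ∀ a ∈ M, l ≤ lf i j k n₁ n₂ n₃ a) (hW : lf i j k n₁ n₂ n₃ W = l)
    (hoff : ∀ a ∈ M, lf i j k n₁ n₂ n₃ a = l → a ≠ W → a j = 0)
    (hY : ∃ Y ∈ M, lf i j k n₁ n₂ n₃ Y = l ∧ Y j = 0 ∧ 1 ≤ Y k) :
    ∃ u₁ u₂ u₃ lu : ℝ, 0 < u₁ ∧ 0 < u₂ ∧ 0 < u₃ ∧ (∀ a ∈ M, lu ≤ lf i j k u₁ u₂ u₃ a) ∧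
      lf i j k u₁ u₂ u₃ W = lu ∧
      ∃ Y ∈ M, lf i j k u₁ u₂ u₃ Y = lu ∧ Y j = 0 ∧ 1 ≤ Y k ∧
        (∀ a ∈ M, lf i j k n₁ n₂ n₃ a = l → a j = 0 → a k ≤ Y k) ∧
        (∃ V ∈ M, lf i j k u₁ u₂ u₃ V = lu ∧ V ≠ W ∧ 1 ≤ V j) ∧
        ∃ v₁ v₂ v₃ lv : ℝ, 0 < v₁ ∧ 0 < v₂ ∧ 0 < v₃ ∧ (∀ a ∈ M, lv ≤ lf i j k v₁ v₂ v₃ a) ∧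
          lf i j k v₁ v₂ v₃ W = lv ∧ lf i j k v₁ v₂ v₃ Y = lv ∧
          ∀ a ∈ M, lf i j k v₁ v₂ v₃ a = lv → a = W ∨ a = Y := by
  have hWi : 1 ≤ W i := by have := hM.deg3 h hWM; omega
  -- The points of the plane `x_j = 0` joined to `W` by an edge lying beyond `n`.
  let Q : Set (Fin 3 → ℕ) := {Y | Y ∈ M ∧ Y j = 0 ∧
    (∀ a ∈ M, lf i j k n₁ n₂ n₃ a = l → a j = 0 → a k ≤ Y k) ∧
    ∃ v₁ v₂ v₃ lv : ℝ, 0 ≤ v₁ ∧ 0 < v₂ ∧ 0 < v₃ ∧ (∀ a ∈ M, lv ≤ lf i j k v₁ v₂ v₃ a) ∧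
      lf i j k v₁ v₂ v₃ W = lv ∧ lf i j k v₁ v₂ v₃ Y = lv ∧
      ∀ a ∈ M, lf i j k v₁ v₂ v₃ a = lv → a ≠ W → a j = 0}
  obtain ⟨Y₀, hY₀M, hY₀l, hY₀j, hY₀k⟩ := hY
  have hQne : Q.Nonempty := by
    obtain ⟨Y, ⟨hYM, hYl, hYj⟩, hYmax⟩ := Set.exists_max_image
      {a | a ∈ M ∧ lf i j k n₁ n₂ n₃ a = l ∧ a j = 0} (fun a => a k)
      (hM.fin.subset fun a ha => ha.1) ⟨Y₀, hY₀M, hY₀l, hY₀j⟩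
    exact ⟨Y, hYM, hYj, fun a ha hal haj => hYmax a ⟨ha, hal, haj⟩,
      n₁, n₂, n₃, l, hn₁, hn₂, hn₃, hmin, hW, hYl, hoff⟩
  obtain ⟨Y, ⟨hYM, hYj, hYbig, v₁, v₂, v₃, lv, hv₁, hv₂, hv₃, hvmin, hvW, hvY, hvoff⟩, hYmax⟩ :=
    Set.exists_max_image Q (fun a => a k) (hM.fin.subset fun a ha => ha.1) hQne
  have hYk : 1 ≤ Y k := hY₀k.trans (hYbig Y₀ hY₀M hY₀l hY₀j)
  -- A point off the plane `x_j = 0` controlling both the rotation and the sign of its result.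
  obtain ⟨V₁, hV₁M, hV₁W, hV₁j, hV₁⟩ : ∃ V ∈ M, V ≠ W ∧ 1 ≤ V j ∧
      (V i + V k ≤ 1 ∨ (W i = 1 ∧ V i = 0)) := by
    obtain ⟨b, hbM, hb⟩ := hM.axis j
    have hb' : b i + b k ≤ 1 := hb i k h.1.symm h.2.2 h.2.1
    by_cases hbW : b = W
    · subst hbW
      by_contra hcon
      push Not at hcon
      refine no_cone hu₀ h hWj hWk fun a ha hab => ?_
      by_contra haj
      have h1 := hcon a ha hab (Nat.one_le_iff_ne_zero.2 haj)
      have h2 : a i ≠ 0 := h1.2 (by omega)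
      exact hab (hM.anti3 h hbM ha (by omega) (by omega) (by omega)).symm
    · refine ⟨b, hbM, hbW, ?_, Or.inl hb'⟩
      have := hM.deg3 h hbM
      omega
  have hV₁nle : W i ≤ V₁ i → False := fun hle =>
    hV₁W (hM.anti3 h hWM hV₁M hle (by omega) (by omega)).symm
  have hV₁nle' : Y i ≤ V₁ i → Y k ≤ V₁ k → False := fun hle hle' => by
    have := hM.anti3 h hYM hV₁M hle (by omega) hle'
    rw [this] at hYj
    omega
  have hYdeg : Y i = 0 → 2 ≤ Y k := fun h0 => by have := hM.deg3 h hYM; omega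
  -- The rotation about the line `WY` that increases the weight of the `i`-th coordinate.
  set p : ℝ := (W i : ℝ) with hp
  set r : ℝ := (Y i : ℝ) with hr
  have hp1 : 1 ≤ p := by rw [hp]; exact_mod_cast hWi
  have hr0 : 0 ≤ r := Nat.cast_nonneg _
  obtain ⟨τ, hτ0, hτmin, X, hXM, hXneg, hXτ⟩ := rotate hM.fin
    (fun a => lf i j k v₁ v₂ v₃ a - lv) (fun a => lf i j k 1 (r - p) 0 a - r)
    (fun a ha => sub_nonneg.2 (hvmin a ha)) (by
      obtain ⟨c, hcM, hc⟩ := hM.axis k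
      have hc' : c i + c j ≤ 1 := hc i j h.2.1.symm h.2.2.symm h.1
      by_cases hcj : c j = 0
      · by_cases hci : c i < Y i
        · refine ⟨c, hcM, ?_⟩
          have : (c i : ℝ) < r := by rw [hr]; exact_mod_cast hci
          simp only [lf, hcj]
          push_cast
          linarith
        · refine ⟨V₁, hV₁M, ?_⟩
          have hb1 : (1 : ℝ) ≤ V₁ j := by exact_mod_cast hV₁j
          have hr01 : Y i = 0 ∨ Y i = 1 := by omega
          have hV₁i : V₁ i = 0 ∨ (V₁ i = 1 ∧ 2 ≤ W i) := by
            by_contra hcon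
            exact hV₁nle (by omega)
          simp only [lf]
          rcases hr01 with h0 | h0 <;> rcases hV₁i with h1 | ⟨h1, h2⟩
          all_goals rw [h0] at hr; rw [h1, hr]; push_cast
          · nlinarith
          · have : (2 : ℝ) ≤ p := by rw [hp]; exact_mod_cast h2
            nlinarith
          · nlinarith
          · have : (2 : ℝ) ≤ p := by rw [hp]; exact_mod_cast h2
            nlinarith
      · refine ⟨c, hcM, ?_⟩
        have h1 : c j = 1 := by omega
        have h2 : c i = 0 := by omega
        simp only [lf, h1, h2]
        push_cast
        linarith)
  have hlin : ∀ (t : ℝ) (a : Fin 3 → ℕ),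
      lf i j k v₁ v₂ v₃ a - lv + t * (lf i j k 1 (r - p) 0 a - r) =
        lf i j k (v₁ + t) (v₂ + t * (r - p)) v₃ a - (lv + t * r) := by
    intro t a; simp only [lf]; ring
  have hψW : lf i j k 1 (r - p) 0 W - r = 0 := by
    simp only [lf, hWj, hWk]; push_cast; ring
  have hψY : lf i j k 1 (r - p) 0 Y - r = 0 := by
    simp only [lf, hYj]; push_cast; ring
  -- A point of the plane `x_j = 0` lying above the rotated line is farther out than `Y`.
  have hfar : ∀ (s : ℝ), 0 ≤ s → ∀ a ∈ M, a j = 0 → lf i j k 1 (r - p) 0 a - r < 0 →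
      lf i j k v₁ v₂ v₃ a - lv + s * (lf i j k 1 (r - p) 0 a - r) = 0 → Y k < a k := by
    intro s hs a ha haj hneg heq
    have hai : (a i : ℝ) < r := by
      simp only [lf, haj] at hneg
      push_cast at hneg
      linarith
    have hai' : a i < Y i := by rw [hr] at hai; exact_mod_cast hai
    by_contra hle
    have : a = Y := hM.anti3 h ha hYM hai'.le (by omega) (by omega)
    rw [this] at hai'
    exact lt_irrefl _ hai'
  simp only [hlin] at hτmin hXτ
  have hτ : 0 < τ := by
    refine lt_of_le_of_ne hτ0 fun h0 => ?_
    rw [← h0] at hXτ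
    have hXv : lf i j k v₁ v₂ v₃ X = lv := by
      have : lf i j k (v₁ + 0) (v₂ + 0 * (r - p)) v₃ X = lf i j k v₁ v₂ v₃ X := by
        rw [add_zero, zero_mul, add_zero]
      linarith
    have hXW : X ≠ W := by
      rintro rfl
      linarith
    have hXj := hvoff X hXM hXv hXW
    have hXk := hfar 0 le_rfl X hXM hXj hXneg (by rw [hXv]; ring)
    have hXQ : X ∈ Q := ⟨hXM, hXj, fun a ha hal haj => (hYbig a ha hal haj).trans hXk.le,
      v₁, v₂, v₃, lv, hv₁, hv₂, hv₃, hvmin, hvW, hXv, hvoff⟩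
    exact absurd (hYmax X hXQ) (not_le.2 hXk)
  set u₁ := v₁ + τ with hu₁
  set u₂ := v₂ + τ * (r - p) with hu₂
  set lu := lv + τ * r with hlu
  have hu₁pos : 0 < u₁ := by linarith
  have huW : lf i j k u₁ u₂ v₃ W = lu := by
    have := hlin τ W
    rw [hψW] at this
    linarith
  have huY : lf i j k u₁ u₂ v₃ Y = lu := by
    have := hlin τ Y
    rw [hψY] at this
    linarith
  have humin : ∀ a ∈ M, lu ≤ lf i j k u₁ u₂ v₃ a := fun a ha => sub_nonneg.1 (hτmin a ha)
  have hu₂pos : 0 < u₂ := by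
    by_contra hneg
    push Not at hneg
    have e1 := humin V₁ hV₁M
    have e2 := huW
    have e3 := huY
    simp only [lf, hWj, hWk, hYj] at e1 e2 e3
    push_cast at e2 e3
    rw [← hp] at e2
    rw [← hr] at e3
    have hb1 : (1 : ℝ) ≤ V₁ j := by exact_mod_cast hV₁j
    have hq1 : (1 : ℝ) ≤ Y k := by exact_mod_cast hYk
    have g1 : u₂ * V₁ j ≤ u₂ := by
      have := mul_le_mul_of_nonpos_left hb1 hneg
      linarith
    have g2 : v₃ ≤ v₃ * Y k := le_mul_of_one_le_right hv₃.le hq1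
    have g3 : 0 ≤ u₁ * r := mul_nonneg hu₁pos.le hr0
    have g4 : Y i ≠ 0 → u₁ ≤ u₁ * r := fun h6 => by
      have h7 : (1 : ℝ) ≤ r := by rw [hr]; exact_mod_cast Nat.one_le_iff_ne_zero.2 h6
      exact le_mul_of_one_le_right hu₁pos.le h7
    rcases hV₁ with h1 | ⟨h1, h2⟩
    · by_cases hc : V₁ k = 0
      · have h3 : V₁ i + 1 ≤ W i := by by_contra hcon; exact hV₁nle (by omega)
        have h3' : (V₁ i : ℝ) + 1 ≤ p := by rw [hp]; exact_mod_cast h3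
        have h4 := mul_le_mul_of_nonneg_left h3' hu₁pos.le
        rw [hc] at e1
        push_cast at e1
        linarith
      · have h3 : V₁ k = 1 := by omega
        have h4 : V₁ i = 0 := by omega
        rw [h3, h4] at e1
        push_cast at e1
        by_cases h6 : Y i = 0
        · have h7 : (2 : ℝ) ≤ Y k := by exact_mod_cast hYdeg h6
          have h8 := mul_le_mul_of_nonneg_left h7 hv₃.le
          linarith
        · have := g4 h6
          linarith
    · have h3 : p = 1 := by rw [hp, h1]; norm_num
      rw [h2] at e1
      push_cast at e1
      rw [h3] at e2
      by_cases h6 : Y i = 0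
      · have h7 : V₁ k + 1 ≤ Y k := by by_contra hcon; exact hV₁nle' (by omega) (by omega)
        have h7' : (V₁ k : ℝ) + 1 ≤ Y k := by exact_mod_cast h7
        have h8 : r = 0 := by rw [hr, h6]; norm_num
        have h9 := mul_le_mul_of_nonneg_left h7' hv₃.le
        rw [h8] at e3
        linarith
      · have := g4 h6
        linarith
  refine ⟨u₁, u₂, v₃, lu, hu₁pos, hu₂pos, hv₃, humin, huW, Y, hYM, huY, hYj, hYk, hYbig, ?_, ?_⟩
  · by_contra hcon
    push Not at hcon
    have hall : ∀ a ∈ M, lf i j k u₁ u₂ v₃ a = lu → a ≠ W → a j = 0 := fun a ha hal haW => by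
      have := hcon a ha hal haW
      omega
    have hXW : X ≠ W := by
      rintro rfl
      linarith
    have hXj := hall X hXM (by linarith) hXW
    have hXk := hfar τ hτ.le X hXM hXj hXneg (by rw [hlin]; exact hXτ)
    have hXQ : X ∈ Q := ⟨hXM, hXj, fun a ha hal haj => (hYbig a ha hal haj).trans hXk.le,
      u₁, u₂, v₃, lu, hu₁pos.le, hu₂pos, hv₃, humin, huW, by linarith, hall⟩
    exact absurd (hYmax X hXQ) (not_le.2 hXk)
  · -- Halfway through the rotation only the endpoints of the edge attain the minimum.
    have hhalf : ∀ a, lf i j k ((v₁ + u₁) / 2) ((v₂ + u₂) / 2) v₃ a =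
        (lf i j k v₁ v₂ v₃ a + lf i j k u₁ u₂ v₃ a) / 2 := by
      intro a; simp only [lf]; ring
    refine ⟨(v₁ + u₁) / 2, (v₂ + u₂) / 2, v₃, (lv + lu) / 2, by positivity, by positivity, hv₃,
      fun a ha => ?_, ?_, ?_, fun a ha hal => ?_⟩
    · rw [hhalf]
      linarith [hvmin a ha, humin a ha]
    · rw [hhalf, hvW, huW]
    · rw [hhalf, hvY, huY]
    · rw [hhalf] at hal
      have h1 : lf i j k v₁ v₂ v₃ a = lv := by linarith [hvmin a ha, humin a ha]
      have h2 : lf i j k u₁ u₂ v₃ a = lu := by linarith [hvmin a ha, humin a ha]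
      by_cases haW : a = W
      · exact Or.inl haW
      · right
        have haj := hvoff a ha h1 haW
        have h3 := hlin τ a
        rw [h1, h2] at h3
        have h4 : lf i j k 1 (r - p) 0 a - r = 0 := by
          have : τ * (lf i j k 1 (r - p) 0 a - r) = 0 := by linarith
          exact (mul_eq_zero.1 this).resolve_left hτ.ne'
        simp only [lf, haj] at h4
        push_cast at h4
        have h5 : (a i : ℝ) = Y i := by rw [← hr]; linarith
        have h6 : a i = Y i := by exact_mod_cast h5
        rcases le_total (a k) (Y k) with h7 | h7
        · exact hM.anti3 h ha hYM h6.le (by omega) h7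
        · exact (hM.anti3 h hYM ha h6.ge (by omega) h7).symm

/-! ### Faces at an axis: rotation of supporting planes -/

lemma lf_swap (i j k : Fin 3) (x y z : ℝ) (a : Fin 3 → ℕ) : lf i j k x y z a = lf i k j x z y a := by
  simp only [lf]; ring

/-- The face produced by `fan` proves the claim for the axis `i`, unless it is exceptional. In the
latter case its apex is the endpoint `Y` and its base lies in the plane `x_k = 0`. -/
lemma fan_step {M : Set (Fin 3 → ℕ)} (hM : Cfg M) {u₀ : Fin 3 → ℝ} (hu₀ : Wit M u₀) {i j k : Fin 3}
    (h : Tri i j k) {W : Fin 3 → ℕ} (hWM : W ∈ M) (hWj : W j = 1) (hWk : W k = 0)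
    {n₁ n₂ n₃ l : ℝ} (hn₁ : 0 ≤ n₁) (hn₂ : 0 < n₂) (hn₃ : 0 < n₃)
    (hmin : ∀ a ∈ M, l ≤ lf i j k n₁ n₂ n₃ a) (hW : lf i j k n₁ n₂ n₃ W = l)
    (hoff : ∀ a ∈ M, lf i j k n₁ n₂ n₃ a = l → a ≠ W → a j = 0)
    (hY : ∃ Y ∈ M, lf i j k n₁ n₂ n₃ Y = l ∧ Y j = 0 ∧ 1 ≤ Y k) :
    Goal M i ∨ ∃ u₁ u₂ u₃ lu : ℝ, 0 < u₁ ∧ 0 < u₂ ∧ 0 < u₃ ∧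
      (∀ a ∈ M, lu ≤ lf i j k u₁ u₂ u₃ a) ∧ lf i j k u₁ u₂ u₃ W = lu ∧
      (∀ a ∈ M, lf i j k n₁ n₂ n₃ a = l → a j = 0 → a k ≤ 1) ∧
      ∃ Y ∈ M, lf i j k u₁ u₂ u₃ Y = lu ∧ Y j = 0 ∧ Y k = 1 ∧
        (∀ a ∈ M, lf i j k u₁ u₂ u₃ a = lu → a ≠ Y → a k = 0) ∧
        ∃ V ∈ M, lf i j k u₁ u₂ u₃ V = lu ∧ V k = 0 ∧ 2 ≤ V j := by
  have hWi : 1 ≤ W i := by have := hM.deg3 h hWM; omega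
  obtain ⟨u₁, u₂, u₃, lu, hu₁, hu₂, hu₃, humin, huW, Y, hYM, huY, hYj, hYk, hYbig,
    ⟨V, hVM, huV, hVW, hVj⟩, v₁, v₂, v₃, lv, hv₁, hv₂, hv₃, hvmin, hvW, hvY, hvex⟩ :=
    fan hM hu₀ h hWM hWj hWk hn₁ hn₂ hn₃ hmin hW hoff hY
  have hmem := mem_mnSet_tri h humin hWM huW
  have hYW : Y ≠ W := by rintro rfl; omega
  have hV1 : V j = 1 → V k ≠ 0 := fun h1 h2 => by
    rcases le_total (V i) (W i) with h3 | h3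
    · exact hVW (hM.anti3 h hVM hWM h3 (by omega) (by omega))
    · exact hVW (hM.anti3 h hWM hVM h3 (by omega) (by omega)).symm
  by_cases hexc : CExc M (tri i j u₁ u₂ u₃)
  · obtain ⟨a, b, c, habc, C, hC, hCb, hCc, hCall⟩ := hexc
    rcases h.cases b with rfl | rfl | rfl
    · -- Apex `W` over the plane `x_i = 0`: then `W = e_i + e_j`, and `Y` lies on the axis `k`.
      exfalso
      have hWC : W = C := by
        by_contra hne
        have := hCall W ((hmem W).2 ⟨hWM, huW⟩) hne
        omega
      subst hWC
      have hYb := hCall Y ((hmem Y).2 ⟨hYM, huY⟩) hYW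
      have hrot : ∀ x, lf k b j v₃ v₁ v₂ x = lf b j k v₁ v₂ v₃ x := fun x => by
        simp only [lf]; ring
      refine no_edge hM hu₀ (i := k) (j := b) (k := j) ⟨h.2.1.symm, h.2.2.symm, h.1⟩ hWM hYM hWk
        hCb hWj hYb hYj hv₃ (l := lv) (w₂ := v₁) (w₃ := v₂) (fun x hx => ?_) ?_ ?_
        fun x hx hxl hxW => ?_
      · rw [hrot]; exact hvmin x hx
      · rw [hrot]; exact hvW
      · rw [hrot]; exact hvY
      · rw [hrot] at hxl
        rcases hvex x hx hxl with rfl | rfl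
        · exact absurd rfl hxW
        · exact hYj
    · exfalso
      have hWC : W = C := by
        by_contra hne
        have := hCall W ((hmem W).2 ⟨hWM, huW⟩) hne
        omega
      have := hCall V ((hmem V).2 ⟨hVM, huV⟩) (hWC ▸ hVW)
      omega
    · right
      have hYC : Y = C := by
        by_contra hne
        have := hCall Y ((hmem Y).2 ⟨hYM, huY⟩) hne
        omega
      subst hYC
      have hVY : V ≠ Y := by rintro rfl; omega
      have hVb := hCall V ((hmem V).2 ⟨hVM, huV⟩) hVY
      refine ⟨u₁, u₂, u₃, lu, hu₁, hu₂, hu₃, humin, huW, fun x hx hxl hxj => ?_, Y, hYM, huY, hYj,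
        hCb, fun x hx hxl hxY => hCall x ((hmem x).2 ⟨hx, hxl⟩) hxY, V, hVM, huV, hVb, ?_⟩
      · exact hCb ▸ hYbig x hx hxl hxj
      · by_contra hlt
        exact hV1 (by omega) hVb
  · left
    refine ⟨tri i j u₁ u₂ u₃, tri_pos hu₁ hu₂ hu₃, hexc, ⟨W, (hmem W).2 ⟨hWM, huW⟩, Y,
      (hmem Y).2 ⟨hYM, huY⟩, V, (hmem V).2 ⟨hVM, huV⟩, hYW.symm, tri i j 0 (Y k) 1, Y k, ?_, ?_, ?_⟩,
      Or.inr ⟨j, k, h, W, (hmem W).2 ⟨hWM, huW⟩, Y, (hmem Y).2 ⟨hYM, huY⟩, hWj, hWk, hYj, hYk,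
        tri i j v₁ v₂ v₃, tri_pos hv₁ hv₂ hv₃, ?_⟩⟩
    · rw [dt_tri h]; simp [lf, hWj, hWk]
    · rw [dt_tri h]; simp [lf, hYj]
    · rw [dt_tri h]
      simp only [lf]
      intro heq
      have heq' : Y k * V j + V k = Y k := by
        have : ((Y k * V j + V k : ℕ) : ℝ) = (Y k : ℕ) := by push_cast; linarith
        exact_mod_cast this
      have : V j = 1 := by nlinarith
      rw [this] at heq'
      exact hV1 this (by omega)
    · ext x
      rw [mem_mnSet_tri h hvmin hWM hvW]
      constructor
      · rintro ⟨hx, hxl⟩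
        exact hvex x hx hxl
      · rintro (rfl | rfl)
        · exact ⟨hWM, hvW⟩
        · exact ⟨hYM, hvY⟩

/-- If `fan_step` fails, its exceptional face starts a second fan, around `Y` and with the roles of
`j` and `k` exchanged. The base of that face contains a point with `x_j ≥ 2`, so the second fan
cannot fail. -/
lemma fan_goal {M : Set (Fin 3 → ℕ)} (hM : Cfg M) {u₀ : Fin 3 → ℝ} (hu₀ : Wit M u₀) {i j k : Fin 3}
    (h : Tri i j k) {W : Fin 3 → ℕ} (hWM : W ∈ M) (hWj : W j = 1) (hWk : W k = 0)
    {n₁ n₂ n₃ l : ℝ} (hn₁ : 0 ≤ n₁) (hn₂ : 0 < n₂) (hn₃ : 0 < n₃)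
    (hmin : ∀ a ∈ M, l ≤ lf i j k n₁ n₂ n₃ a) (hW : lf i j k n₁ n₂ n₃ W = l)
    (hoff : ∀ a ∈ M, lf i j k n₁ n₂ n₃ a = l → a ≠ W → a j = 0)
    (hY : ∃ Y ∈ M, lf i j k n₁ n₂ n₃ Y = l ∧ Y j = 0 ∧ 1 ≤ Y k) : Goal M i := by
  rcases fan_step hM hu₀ h hWM hWj hWk hn₁ hn₂ hn₃ hmin hW hoff hY with hg |
    ⟨u₁, u₂, u₃, lu, hu₁, hu₂, hu₃, humin, huW, -, Y, hYM, huY, hYj, hYk, huoff, V, hVM, huV,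
      hVk, hVj⟩
  · exact hg
  · simp only [lf_swap i j k] at humin huW huY huoff huV
    rcases fan_step hM hu₀ h.rot hYM hYk hYj hu₁.le hu₃ hu₂ humin huY huoff
      ⟨W, hWM, huW, hWk, hWj.ge⟩ with hg | ⟨_, _, _, _, _, _, _, _, _, hle, _⟩
    · exact hg
    · have := hle V hVM huV hVk
      omega

/-- The case where the Newton diagram does not meet the axis `OX_i`. -/
lemma goal_of_not_axis {M : Set (Fin 3 → ℕ)} (hM : Cfg M) {u₀ : Fin 3 → ℝ} (hu₀ : Wit M u₀)
    {i j k : Fin 3} (h : Tri i j k) (hno : ∀ a ∈ M, a j = 0 → a k ≠ 0) {W : Fin 3 → ℕ}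
    (hWM : W ∈ M) (hWj : W j = 1) (hWk : W k = 0) : Goal M i := by
  obtain ⟨Y, ⟨hYM, hYj⟩, hYmin⟩ := Set.exists_min_image {a | a ∈ M ∧ a j = 0} (fun a => a k)
    (hM.fin.subset fun a ha => ha.1) (hM.plane j)
  have hYk : 1 ≤ Y k := Nat.one_le_iff_ne_zero.2 (hno Y hYM hYj)
  have hlf : ∀ a, lf i j k 0 (Y k) 1 a = ((Y k * a j + a k : ℕ) : ℝ) := fun a => by
    simp [lf]
  refine fan_goal hM hu₀ h hWM hWj hWk (n₁ := 0) (n₂ := Y k) (n₃ := 1) (l := (Y k : ℝ)) le_rfl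
    (by exact_mod_cast hYk) one_pos (fun a ha => ?_) ?_ (fun a ha hal haW => ?_)
    ⟨Y, hYM, ?_, hYj, hYk⟩
  · rw [hlf]
    norm_cast
    by_cases haj : a j = 0
    · have := hYmin a ⟨ha, haj⟩
      change Y k ≤ a k at this
      omega
    · have := Nat.le_mul_of_pos_right (Y k) (Nat.pos_of_ne_zero haj)
      omega
  · rw [hlf]; simp [hWj, hWk]
  · rw [hlf] at hal
    norm_cast at hal
    by_contra haj
    have h1 : a j = 1 := by
      have : 1 ≤ a j := Nat.one_le_iff_ne_zero.2 haj
      nlinarith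
    rw [h1] at hal
    rcases le_total (a i) (W i) with h3 | h3
    · exact haW (hM.anti3 h ha hWM h3 (by omega) (by omega))
    · exact haW (hM.anti3 h hWM ha h3 (by omega) (by omega)).symm
  · rw [hlf]; simp [hYj]

set_option maxHeartbeats 1000000 in
/-- The case of an exponent `Z = m e_i` on the axis. Among the lines from `Z` to the other
exponents, `B` gives the first one seen from the plane `x_k = 0`; rotating about `ZB` produces a
face at `Z`. If it is exceptional, either it starts a fan around a neighbour of `Z`, or the next face
at `Z` is unexceptional. -/
lemma goal_of_axis {M : Set (Fin 3 → ℕ)} (hM : Cfg M) {u₀ : Fin 3 → ℝ} (hu₀ : Wit M u₀)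
    {i j k : Fin 3} (h : Tri i j k) {Z : Fin 3 → ℕ} (hZM : Z ∈ M) (hZj : Z j = 0) (hZk : Z k = 0) :
    Goal M i := by
  have hZi : 2 ≤ Z i := by have := hM.deg3 h hZM; omega
  have hlt : ∀ a ∈ M, a ≠ Z → a i < Z i := fun a ha hne => by
    by_contra hcon
    exact hne (hM.anti3 h hZM ha (by omega) (by omega) (by omega)).symm
  have hoffaxis : ∀ a ∈ M, a ≠ Z → a j = 0 → a k = 0 → False := fun a ha hne h1 h2 =>
    hne (hM.anti3 h ha hZM (hlt a ha hne).le (by omega) (by omega))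
  set m : ℝ := (Z i : ℝ) with hm
  have hm2 : 2 ≤ m := by rw [hm]; exact_mod_cast hZi
  have hltm : ∀ a ∈ M, a ≠ Z → 0 < m - a i := fun a ha hne => by
    have : (a i : ℝ) < m := by rw [hm]; exact_mod_cast hlt a ha hne
    linarith
  obtain ⟨b, hbM, hb⟩ := hM.axis j
  have hb' : b i + b k ≤ 1 := hb i k h.1.symm h.2.2 h.2.1
  obtain ⟨c, hcM, hc⟩ := hM.axis k
  have hc' : c i + c j ≤ 1 := hc i j h.2.1.symm h.2.2.symm h.1
  have hbZ : b ≠ Z := by rintro rfl; omega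
  have hcZ : c ≠ Z := by rintro rfl; omega
  -- `B` minimizes the pair `(x_k / (m - x_i), x_j / (m - x_i))` lexicographically.
  obtain ⟨B₀, ⟨hB₀M, hB₀Z⟩, hB₀⟩ := Set.exists_min_image {a | a ∈ M ∧ a ≠ Z}
    (fun a => (a k : ℝ) / (m - a i)) (hM.fin.subset fun a ha => ha.1) ⟨b, hbM, hbZ⟩
  obtain ⟨B, ⟨⟨hBM, hBZ⟩, hBk⟩, hBmin⟩ := Set.exists_min_image
    {a | (a ∈ M ∧ a ≠ Z) ∧ (a k : ℝ) / (m - a i) = (B₀ k : ℝ) / (m - B₀ i)}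
    (fun a => (a j : ℝ) / (m - a i)) (hM.fin.subset fun a ha => ha.1.1)
    ⟨B₀, ⟨hB₀M, hB₀Z⟩, rfl⟩
  obtain ⟨γ, hγ⟩ : ∃ γ, γ = (B k : ℝ) / (m - B i) := ⟨_, rfl⟩
  obtain ⟨β, hβ⟩ : ∃ β, β = (B j : ℝ) / (m - B i) := ⟨_, rfl⟩
  have hBpos := hltm B hBM hBZ
  have hγ0 : 0 ≤ γ := by rw [hγ]; positivity
  have hβ0 : 0 ≤ β := by rw [hβ]; positivity
  have hγB : γ * (m - B i) = B k := by rw [hγ]; field_simp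
  have hβB : β * (m - B i) = B j := by rw [hβ]; field_simp
  have hγle : ∀ a ∈ M, γ * (m - a i) ≤ a k := fun a ha => by
    by_cases haZ : a = Z
    · subst haZ; rw [← hm, sub_self, mul_zero]; positivity
    · have h1 := hB₀ a ⟨ha, haZ⟩
      change (B₀ k : ℝ) / (m - B₀ i) ≤ (a k : ℝ) / (m - a i) at h1
      rw [← hBk, ← hγ, le_div_iff₀ (hltm a ha haZ)] at h1
      exact h1
  have hβle : ∀ a ∈ M, a ≠ Z → γ * (m - a i) = a k → β * (m - a i) ≤ a j := fun a ha haZ he => by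
    have hpos := hltm a ha haZ
    have h1 := hBmin a ⟨⟨ha, haZ⟩, by rw [← hBk, ← hγ, ← he]; field_simp⟩
    change (B j : ℝ) / (m - B i) ≤ (a j : ℝ) / (m - a i) at h1
    rw [← hβ, le_div_iff₀ hpos] at h1
    exact h1
  -- The point next to the axis `j` bounds `γ` by `1 / m`.
  have hBk' : B k = 0 ∨ (B k = 1 ∧ B i = 0) := by
    have h1 := hγle b hbM
    by_cases hbk : b k = 0
    · left
      rw [hbk] at h1
      have h2 := hltm b hbM hbZ
      have h3 : γ = 0 := by
        push_cast at h1
        nlinarith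
      rw [h3, zero_mul] at hγB
      exact_mod_cast hγB.symm
    · have h2 : b k = 1 := by omega
      have h3 : b i = 0 := by omega
      rw [h2, h3] at h1
      push_cast at h1
      have h4 : (B k : ℝ) + γ * B i ≤ 1 := by linarith
      have h5 : (B k : ℝ) ≤ 1 := by
        have : 0 ≤ γ * B i := by positivity
        linarith
      have h5' : B k ≤ 1 := by exact_mod_cast h5
      rcases Nat.lt_or_ge 0 (B k) with h6 | h6
      · right
        have h7 : B k = 1 := by omega
        rw [h7] at h4 hγB
        push_cast at h4 hγB
        refine ⟨h7, ?_⟩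
        have h8 : 0 < γ := by
          rcases hγ0.eq_or_lt with h9 | h9
          · rw [← h9] at hγB; linarith
          · exact h9
        have h9 : (B i : ℝ) ≤ 0 := by
          by_contra hcon
          push Not at hcon
          have := mul_pos h8 hcon
          linarith
        exact_mod_cast le_antisymm h9 (Nat.cast_nonneg _)
      · left; omega
  by_cases hhit : ∃ a ∈ M, lf i j k β 1 0 a - β * m < 0
  swap
  · -- No rotation: `B = e_j + e_k`, and `M` consists of `Z` and `B` only.
    exfalso
    push Not at hhit
    have hβle' : ∀ a ∈ M, β * (m - a i) ≤ a j := fun a ha => by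
      have := hhit a ha
      simp only [lf] at this
      linarith
    have hBj' : B j = 0 ∨ (B j = 1 ∧ B i = 0) := by
      have h1 := hβle' c hcM
      by_cases hcj : c j = 0
      · left
        rw [hcj] at h1
        have h2 := hltm c hcM hcZ
        have h3 : β = 0 := by
          push_cast at h1
          nlinarith
        rw [h3, zero_mul] at hβB
        exact_mod_cast hβB.symm
      · have h2 : c j = 1 := by omega
        have h3 : c i = 0 := by omega
        rw [h2, h3] at h1
        push_cast at h1
        have h4 : (B j : ℝ) + β * B i ≤ 1 := by linarith
        have h5 : (B j : ℝ) ≤ 1 := by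
          have : 0 ≤ β * B i := by positivity
          linarith
        have h5' : B j ≤ 1 := by exact_mod_cast h5
        rcases Nat.lt_or_ge 0 (B j) with h6 | h6
        · right
          have h7 : B j = 1 := by omega
          rw [h7] at h4 hβB
          push_cast at h4 hβB
          refine ⟨h7, ?_⟩
          have h8 : 0 < β := by
            rcases hβ0.eq_or_lt with h9 | h9
            · rw [← h9] at hβB; linarith
            · exact h9
          have h9 : (B i : ℝ) ≤ 0 := by
            by_contra hcon
            push Not at hcon
            have := mul_pos h8 hcon
            linarith
          exact_mod_cast le_antisymm h9 (Nat.cast_nonneg _)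
        · left; omega
    have hBdeg := hM.deg3 h hBM
    have hBoff := hoffaxis B hBM hBZ
    have hB1 : B k = 1 ∧ B j = 1 ∧ B i = 0 := by
      by_cases h1 : B j = 0
      · by_cases h2 : B k = 0
        · exact (hBoff h1 h2).elim
        · omega
      · omega
    obtain ⟨hB1, hB2, hB3⟩ := hB1
    have hpos : 0 < γ ∧ 0 < β := by
      rw [hB1] at hγB
      rw [hB2] at hβB
      push_cast at hγB hβB
      exact ⟨pos_of_mul_pos_left (by rw [hγB]; exact one_pos) hBpos.le,
        pos_of_mul_pos_left (by rw [hβB]; exact one_pos) hBpos.le⟩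
    refine no_cone hu₀ (i := k) (j := j) (k := i) ⟨h.2.2.symm, h.2.1.symm, h.1.symm⟩ hB2 hB3
      fun a ha haB => ?_
    by_contra haj
    have haZ : a ≠ Z := by rintro rfl; exact haj hZj
    have h1 := (mul_pos hpos.1 (hltm a ha haZ)).trans_le (hγle a ha)
    have h1' : 0 < a k := by exact_mod_cast h1
    exact haB (hM.anti3 h hBM ha (by omega) (by omega) (by omega)).symm
  obtain ⟨τ, hτ0, hτmin, V, hVM, hVneg, hVτ⟩ := rotate hM.fin
    (fun a => lf i j k γ 0 1 a - γ * m) (fun a => lf i j k β 1 0 a - β * m)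
    (fun a ha => by
      have := hγle a ha
      simp only [lf]
      linarith) hhit
  have hlin : ∀ (t : ℝ) (a : Fin 3 → ℕ),
      lf i j k γ 0 1 a - γ * m + t * (lf i j k β 1 0 a - β * m) =
        lf i j k (γ + t * β) t 1 a - (γ + t * β) * m := by
    intro t a; simp only [lf]; ring
  simp only [hlin] at hτmin hVτ
  have hψZ : lf i j k β 1 0 Z - β * m = 0 := by simp [lf, hZj, hm]
  have hψB : lf i j k β 1 0 B - β * m = 0 := by
    simp only [lf]; rw [← hβB]; ring
  have hVZ : V ≠ Z := by rintro rfl; linarith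
  have hVB : V ≠ B := by rintro rfl; linarith
  have hVneg' : (V j : ℝ) < β * (m - V i) := by
    simp only [lf] at hVneg
    linarith
  have hφV : 0 < lf i j k γ 0 1 V - γ * m := by
    rcases (sub_nonneg.2 (hγle V hVM)).eq_or_lt with he | hl
    · have := hβle V hVM hVZ (by linarith)
      linarith
    · simp only [lf]; linarith
  have hτ : 0 < τ := by
    refine lt_of_le_of_ne hτ0 fun h0 => ?_
    have := hlin τ V
    rw [hVτ, ← h0, zero_mul] at this
    linarith
  set u₁ := γ + τ * β with hu₁
  have humin : ∀ a ∈ M, u₁ * m ≤ lf i j k u₁ τ 1 a := fun a ha => sub_nonneg.1 (hτmin a ha)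
  have huZ : lf i j k u₁ τ 1 Z = u₁ * m := by simp [lf, hZj, hZk, hm]
  have huV : lf i j k u₁ τ 1 V = u₁ * m := by linarith
  have huB : lf i j k u₁ τ 1 B = u₁ * m := by
    have h1 := hlin τ B
    rw [hψB] at h1
    have h2 : lf i j k γ 0 1 B - γ * m = 0 := by simp only [lf]; rw [← hγB]; ring
    linarith
  have hu₁pos : 0 < u₁ := by
    have hβpos : 0 < β := by
      rcases hβ0.eq_or_lt with h1 | h1
      · rw [← h1, zero_mul] at hVneg'
        have : (0 : ℝ) ≤ V j := Nat.cast_nonneg _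
        linarith
      · exact h1
    positivity
  have hmem := mem_mnSet_tri h humin hZM huZ
  have hZm := (hmem Z).2 ⟨hZM, huZ⟩
  have hBm := (hmem B).2 ⟨hBM, huB⟩
  have hVm := (hmem V).2 ⟨hVM, huV⟩
  by_cases hexc : CExc M (tri i j u₁ τ 1)
  swap
  · refine ⟨tri i j u₁ τ 1, tri_pos hu₁pos hτ one_pos, hexc, ⟨Z, hZm, B, hBm, V, hVm, hBZ.symm,
      tri i j β 1 0, β * m, ?_, ?_, ?_⟩, Or.inl ⟨Z, hZm, fun l hl => ?_⟩⟩
    · rw [dt_tri h]; linarith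
    · rw [dt_tri h]; linarith
    · rw [dt_tri h]; exact fun he => by linarith
    · rcases h.cases l with rfl | rfl | rfl
      · exact absurd rfl hl
      · exact hZj
      · exact hZk
  obtain ⟨a', b', c', habc, C, hC, hCb, hCc, hCall⟩ := hexc
  rcases h.cases b' with rfl | rfl | rfl
  · -- The base cannot lie in `x_i = 0`, because of `Z`.
    exfalso
    have hZC : Z = C := by
      by_contra hne
      have := hCall Z hZm hne
      omega
    rw [hZC] at hZi
    omega
  · -- Base in `x_j = 0`, with apex `B`.
    have hBj : B b' ≠ 0 := fun h0 => by
      rw [h0] at hβB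
      push_cast at hβB
      have h1 : β = 0 := by nlinarith
      rw [h1, zero_mul] at hVneg'
      have : (0 : ℝ) ≤ V b' := Nat.cast_nonneg _
      linarith
    have hBC : B = C := by
      by_contra hne
      exact hBj (hCall B hBm hne)
    subst hBC
    have hVj := hCall V hVm hVB
    rcases h.cases c' with rfl | rfl | rfl
    · -- `B = e_j + e_k`, and every exponent besides `Z` has a positive `k`-th coordinate.
      exfalso
      have hBdeg := hM.deg3 h hBM
      have hB1 : B k = 1 := by omega
      have hγpos : 0 < γ := by
        rw [hB1] at hγB
        push_cast at hγB
        exact pos_of_mul_pos_left (by rw [hγB]; exact one_pos) hBpos.le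
      refine no_cone hu₀ (i := k) (j := b') (k := c') ⟨h.2.2.symm, h.2.1.symm, h.1.symm⟩ hCb hCc
        fun a ha haB => ?_
      by_contra haj
      have haZ : a ≠ Z := by rintro rfl; exact haj hZj
      have h1 := (mul_pos hγpos (hltm a ha haZ)).trans_le (hγle a ha)
      have h1' : 0 < a k := by exact_mod_cast h1
      exact haB (hM.anti3 h hBM ha (by omega) (by omega) (by omega)).symm
    · exact absurd rfl habc.2.2
    · refine fan_goal hM hu₀ h hBM hCb hCc hu₁pos.le hτ one_pos humin huB
        (fun a ha hal haB => hCall a ((hmem a).2 ⟨ha, hal⟩) haB) ⟨V, hVM, huV, hVj, ?_⟩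
      exact Nat.one_le_iff_ne_zero.2 fun h0 => hoffaxis V hVM hVZ hVj h0
  · -- Base in `x_k = 0`, with apex `V`.
    have hBC : B ≠ C := fun hBC => by
      have h1 : V b' = 0 := hCall V hVm (hBC ▸ hVB)
      have h2 := hγle V hVM
      rw [h1] at h2
      rw [hBC, hCb, ← hBC] at hγB
      push_cast at h2 hγB
      have h3 := hltm V hVM hVZ
      have h4 : γ ≤ 0 := by
        by_contra hcon
        push Not at hcon
        have := mul_pos hcon h3
        linarith
      have := mul_nonpos_of_nonpos_of_nonneg h4 hBpos.le
      linarith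
    have hBk0 := hCall B hBm hBC
    have hγz : γ = 0 := by rw [hγ, hBk0]; simp
    have hVC : V = C := by
      by_contra hne
      have h1 := hCall V hVm hne
      simp only [lf, h1, hγz] at hφV
      push_cast at hφV
      linarith
    subst hVC
    rcases h.cases c' with rfl | rfl | rfl
    · by_cases hVj2 : V j = 1
      · exfalso
        exact no_edge hM hu₀ h hVM hZM hCc hVj2 hCb hZj hZk hu₁pos humin huV huZ
          fun a ha hal haV => hCall a ((hmem a).2 ⟨ha, hal⟩) haV
      -- Rotating further, about `ZV`, leads to an unexceptional face.
      have hVj : 2 ≤ V j := by have := hM.deg3 h hVM; omega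
      have hVjR : (2 : ℝ) ≤ V j := by exact_mod_cast hVj
      obtain ⟨δ, hδ⟩ : ∃ δ, δ = (V j : ℝ) / m := ⟨_, rfl⟩
      have hδm : δ * m = V j := by rw [hδ]; field_simp
      have hδpos : 0 < δ := by rw [hδ]; positivity
      obtain ⟨σ, hσ0, hσmin, X, hXM, hXneg, hXσ⟩ := rotate hM.fin
        (fun a => lf c' j b' u₁ τ 1 a - u₁ * m) (fun a => lf c' j b' δ 1 0 a - δ * m)
        (fun a ha => sub_nonneg.2 (humin a ha)) ⟨c, hcM, by
          simp only [lf]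
          have h1 : (c c' : ℝ) + c j ≤ 1 := by exact_mod_cast hc'
          by_cases h4 : c j = 0
          · have h2 := mul_pos hδpos (hltm c hcM hcZ)
            rw [h4]
            push_cast
            linarith
          · have h5 : c c' = 0 := by omega
            rw [h5] at h1 ⊢
            push_cast at h1 ⊢
            linarith⟩
      have hlin' : ∀ (t : ℝ) (a : Fin 3 → ℕ),
          lf c' j b' u₁ τ 1 a - u₁ * m + t * (lf c' j b' δ 1 0 a - δ * m) =
            lf c' j b' (u₁ + t * δ) (τ + t) 1 a - (u₁ + t * δ) * m := by
        intro t a; simp only [lf]; ring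
      simp only [hlin'] at hσmin hXσ
      have hψZ' : lf c' j b' δ 1 0 Z - δ * m = 0 := by simp [lf, hZj, hm]
      have hψV' : lf c' j b' δ 1 0 V - δ * m = 0 := by simp [lf, hCc, hδm]
      have hXZ : X ≠ Z := by rintro rfl; linarith
      have hXV : X ≠ V := by rintro rfl; linarith
      have humin' : ∀ a ∈ M, (u₁ + σ * δ) * m ≤ lf c' j b' (u₁ + σ * δ) (τ + σ) 1 a :=
        fun a ha => sub_nonneg.1 (hσmin a ha)
      have huZ' : lf c' j b' (u₁ + σ * δ) (τ + σ) 1 Z = (u₁ + σ * δ) * m := by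
        simp [lf, hZj, hZk, hm]
      have huX' : lf c' j b' (u₁ + σ * δ) (τ + σ) 1 X = (u₁ + σ * δ) * m := by linarith
      have huV' : lf c' j b' (u₁ + σ * δ) (τ + σ) 1 V = (u₁ + σ * δ) * m := by
        have := hlin' σ V
        rw [hψV', huV] at this
        linarith
      have hmem' := mem_mnSet_tri h humin' hZM huZ'
      have hZm' := (hmem' Z).2 ⟨hZM, huZ'⟩
      have hVm' := (hmem' V).2 ⟨hVM, huV'⟩
      have hXm' := (hmem' X).2 ⟨hXM, huX'⟩
      refine ⟨tri c' j (u₁ + σ * δ) (τ + σ) 1, tri_pos (by positivity) (by positivity) one_pos, ?_,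
        ⟨Z, hZm', V, hVm', X, hXm', hVZ.symm, tri c' j δ 1 0, δ * m, ?_, ?_, ?_⟩,
        Or.inl ⟨Z, hZm', fun l hl => ?_⟩⟩
      · rintro ⟨a₁, b₁, c₁, habc₁, D, hD, hDb, hDc, hDall⟩
        rcases h.cases b₁ with rfl | rfl | rfl
        · have hZD : Z = D := by
            by_contra hne
            have := hDall Z hZm' hne
            omega
          rw [hZD] at hZi
          omega
        · have hVD : V = D := by
            by_contra hne
            have := hDall V hVm' hne
            omega
          rw [hVD] at hVj
          omega
        · have hVD : V = D := by
            by_contra hne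
            have := hDall V hVm' hne
            omega
          have hXk := hDall X hXm' (hVD ▸ hXV)
          have h1 := humin X hXM
          have h2 := huV
          have h3 := hltm X hXM hXZ
          simp only [lf, hXk, hCc, hCb, hu₁, hγz] at h1 h2 hXneg
          push_cast at h1 h2 hXneg
          -- `β (m - x_i) ≤ x_j < δ (m - x_i)` at `X`, whereas `δ m < β m` at `V`.
          have h4 : β * (m - X c') ≤ X j := by
            have : τ * (β * (m - X c')) ≤ τ * X j := by linarith
            exact le_of_mul_le_mul_left this hτ
          have h5 : δ * m < β * m := by
            have : τ * (δ * m) < τ * (β * m) := by rw [hδm]; linarith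
            exact lt_of_mul_lt_mul_left this hτ.le
          have h6 : δ < β := lt_of_mul_lt_mul_right h5 (by linarith)
          have := mul_lt_mul_of_pos_right h6 h3
          linarith
      · rw [dt_tri h]; linarith
      · rw [dt_tri h]; linarith
      · rw [dt_tri h]; exact fun he => by linarith
      · rcases h.cases l with rfl | rfl | rfl
        · exact absurd rfl hl
        · exact hZj
        · exact hZk
    · have hoff : ∀ a ∈ M, lf i b' c' u₁ 1 τ a = u₁ * m → a ≠ V → a b' = 0 := fun a ha hal haV => by
        rw [lf_swap] at hal
        exact hCall a ((hmem a).2 ⟨ha, hal⟩) haV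
      simp only [lf_swap i c' b'] at humin huV huB
      refine fan_goal hM hu₀ h.rot hVM hCb hCc hu₁pos.le one_pos hτ humin huV hoff
        ⟨B, hBM, huB, hBk0, ?_⟩
      exact Nat.one_le_iff_ne_zero.2 fun h0 => hoffaxis B hBM hBZ h0 hBk0
    · exact absurd rfl habc.2.2

lemma goal_of_cfg {M : Set (Fin 3 → ℕ)} (hM : Cfg M) {u₀ : Fin 3 → ℝ} (hu₀ : Wit M u₀)
    (i : Fin 3) : Goal M i := by
  obtain ⟨j, k, h⟩ := Tri.exists i
  by_cases hax : ∃ Z ∈ M, Z j = 0 ∧ Z k = 0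
  · obtain ⟨Z, hZM, hZj, hZk⟩ := hax
    exact goal_of_axis hM hu₀ h hZM hZj hZk
  · push Not at hax
    obtain ⟨W, hWM, hW⟩ := hM.axis i
    have hW' := hW j k h.1 h.2.1 h.2.2
    have hWne := hax W hWM
    by_cases hWj : W j = 0
    · exact goal_of_not_axis hM hu₀ h.rot (fun a ha hk hj => hax a ha hj hk) hWM
        (by have := hWne hWj; omega) hWj
    · exact goal_of_not_axis hM hu₀ h hax hWM (by omega) (by omega)

/-! ### Compact faces as hulls of exponents of least weight -/

/-- `M` is a finite nonempty set of exponents of `f` generating `supp f` as an upper set, so that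
`M + ℝ₊³` has the same convex hull as `supp f + ℝ₊³`. -/
structure Gen (f : (Fin 3 → ℂ) → ℂ) (M : Set (Fin 3 → ℕ)) : Prop where
  fin : M.Finite
  ne : M.Nonempty
  sub : M ⊆ NSupp f
  dom : ∀ ν ∈ NSupp f, ∃ μ ∈ M, ∀ l, μ l ≤ ν l

/-- The exponent `a` as a point of `ℝ³`. -/
def emb (a : Fin 3 → ℕ) : Fin 3 → ℝ := fun i => (a i : ℝ)

/-- The linear form with coefficients `u`. -/
noncomputable def lin (u : Fin 3 → ℝ) : (Fin 3 → ℝ) →ₗ[ℝ] ℝ := ∑ i, u i • LinearMap.proj i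

lemma lin_apply (u x : Fin 3 → ℝ) : lin u x = ∑ i, u i * x i := by
  simp [lin]

lemma lin_emb (u : Fin 3 → ℝ) (a : Fin 3 → ℕ) : lin u (emb a) = dt u a := lin_apply _ _

lemma emb_inj : Function.Injective emb := fun a b h => by
  ext i
  have := congrFun h i
  simpa [emb] using this

lemma dt_single (j : Fin 3) (a : Fin 3 → ℕ) : dt (Pi.single j 1) a = a j := by
  simp [dt, Pi.single_apply]

lemma dt_add_smul (u d : Fin 3 → ℝ) (ε : ℝ) (a : Fin 3 → ℕ) :
    dt (u + ε • d) a = dt u a + ε * dt d a := by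
  simp only [← lin_emb, lin_apply, Pi.add_apply, Pi.smul_apply, smul_eq_mul, Finset.mul_sum,
    ← Finset.sum_add_distrib]
  exact Finset.sum_congr rfl fun i _ => by ring

lemma mnSet_nonempty {M : Set (Fin 3 → ℕ)} (hfin : M.Finite) (hne : M.Nonempty)
    (u : Fin 3 → ℝ) : (mnSet M u).Nonempty := by
  obtain ⟨a, ha, h⟩ := Set.exists_min_image M (dt u) hfin hne
  exact ⟨a, ha, h⟩

/-- Tilting a positive weight `u` slightly in the direction `d` selects the part of the face of
`u` on which `d` is least. -/
lemma perturb {M : Set (Fin 3 → ℕ)} (hfin : M.Finite) {u : Fin 3 → ℝ} (hu : ∀ l, 0 < u l)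
    (d : Fin 3 → ℝ) {A : Fin 3 → ℕ} (hA : A ∈ mnSet M u)
    (hmin : ∀ B ∈ mnSet M u, dt d A ≤ dt d B) :
    ∃ v : Fin 3 → ℝ, (∀ l, 0 < v l) ∧ ∀ a, a ∈ mnSet M v ↔ a ∈ mnSet M u ∧ dt d a = dt d A := by
  have key : ∀ x y z : ℝ, 0 < x → ∀ᶠ ε in 𝓝[>] (0 : ℝ), 0 < x + ε * y - ε * z := by
    intro x y z hx
    have hc : Continuous fun ε : ℝ => x + ε * y - ε * z := by fun_prop
    have : Tendsto (fun ε : ℝ => x + ε * y - ε * z) (𝓝[>] 0) (𝓝 x) := by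
      have h := hc.tendsto 0
      simp only [zero_mul, add_zero, sub_zero] at h
      exact h.mono_left nhdsWithin_le_nhds
    exact this.eventually (lt_mem_nhds hx)
  have h1 : ∀ᶠ ε in 𝓝[>] (0 : ℝ), ∀ l, 0 < u l + ε * d l - ε * 0 :=
    Filter.eventually_all.2 fun l => key _ _ _ (hu l)
  have h2 : ∀ᶠ ε in 𝓝[>] (0 : ℝ), ∀ B ∈ M, dt u A < dt u B →
      0 < (dt u B - dt u A) + ε * dt d B - ε * dt d A := by
    refine (Filter.eventually_all_finite hfin).2 fun B _ => ?_
    by_cases hB : dt u A < dt u B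
    · filter_upwards [key _ (dt d B) (dt d A) (sub_pos.2 hB)] with ε hε _ using hε
    · exact Filter.Eventually.of_forall fun ε h => absurd h hB
  obtain ⟨ε, ⟨h1, h2⟩, hε⟩ := ((h1.and h2).and self_mem_nhdsWithin).exists
  have hε' : (0 : ℝ) < ε := hε
  have hAu : ∀ a, a ∈ mnSet M u ↔ a ∈ M ∧ dt u a = dt u A := mem_mnSet_iff hA.2 hA.1 rfl
  have hle : ∀ a ∈ M, dt (u + ε • d) A ≤ dt (u + ε • d) a := fun a ha => by
    rw [dt_add_smul, dt_add_smul]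
    rcases (hA.2 a ha).eq_or_lt with h | h
    · have := mul_le_mul_of_nonneg_left (hmin a ((hAu a).2 ⟨ha, h.symm⟩)) hε'.le
      linarith
    · linarith [h2 a ha h]
  refine ⟨u + ε • d, fun l => ?_, fun a => ?_⟩
  · have := h1 l
    simp only [Pi.add_apply, Pi.smul_apply, smul_eq_mul]
    linarith
  rw [mem_mnSet_iff hle hA.1 rfl, hAu, dt_add_smul, dt_add_smul]
  constructor
  · rintro ⟨ha, he⟩
    rcases (hA.2 a ha).eq_or_lt with h | h
    · refine ⟨⟨ha, h.symm⟩, ?_⟩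
      have : ε * dt d a = ε * dt d A := by linarith
      exact mul_left_cancel₀ hε'.ne' this
    · linarith [h2 a ha h]
  · rintro ⟨⟨ha, h⟩, h'⟩
    exact ⟨ha, by rw [h, h']⟩

section Faces

variable {f : (Fin 3 → ℂ) → ℂ} {M : Set (Fin 3 → ℕ)}

lemma Gen.emb_mem (hG : Gen f M) {a : Fin 3 → ℕ} (ha : a ∈ M) : emb a ∈ NDiag f :=
  subset_convexHull ℝ _ ⟨a, hG.sub ha, fun _ => le_rfl⟩

/-- A convexity argument: the points of the half-space `⟨u, x⟩ ≥ l` which lie in the hull of the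
least exponents when they are on its boundary form a convex set containing `supp f + ℝ₊³`. -/
lemma Gen.face_aux (hG : Gen f M) {u : Fin 3 → ℝ} (hu : ∀ l, 0 < u l) {w : Fin 3 → ℕ}
    (hw : w ∈ mnSet M u) {x : Fin 3 → ℝ} (hx : x ∈ NDiag f) :
    dt u w ≤ lin u x ∧ (lin u x = dt u w → x ∈ convexHull ℝ (emb '' mnSet M u)) := by
  have hconv : Convex ℝ {x : Fin 3 → ℝ | dt u w ≤ lin u x ∧
      (lin u x = dt u w → x ∈ convexHull ℝ (emb '' mnSet M u))} := by
    rintro x ⟨hx1, hx2⟩ y ⟨hy1, hy2⟩ a b ha hb hab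
    have hl : lin u (a • x + b • y) = a * lin u x + b * lin u y := by simp
    have h1 := mul_le_mul_of_nonneg_left hx1 ha
    have h2 := mul_le_mul_of_nonneg_left hy1 hb
    have h3 : a * dt u w + b * dt u w = dt u w := by rw [← add_mul, hab, one_mul]
    refine ⟨by rw [hl]; linarith, fun he => ?_⟩
    rw [hl] at he
    rcases ha.eq_or_lt with rfl | ha'
    · have hb1 : b = 1 := by linarith
      subst hb1
      simpa using hy2 (by linarith)
    rcases hb.eq_or_lt with rfl | hb'
    · have ha1 : a = 1 := by linarith
      subst ha1
      simpa using hx2 (by linarith)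
    · have h4 : lin u x = dt u w := mul_left_cancel₀ ha'.ne' (by linarith)
      have h5 : lin u y = dt u w := mul_left_cancel₀ hb'.ne' (by linarith)
      exact convex_convexHull ℝ _ (hx2 h4) (hy2 h5) ha hb hab
  refine convexHull_min ?_ hconv hx
  rintro y ⟨ν, hν, hνy⟩
  obtain ⟨μ, hμ, hμν⟩ := hG.dom ν hν
  have hμy : ∀ l, emb μ l ≤ y l := fun l =>
    le_trans (by simp only [emb]; exact_mod_cast hμν l) (hνy l)
  have hle : dt u μ ≤ lin u y := by
    rw [← lin_emb, lin_apply, lin_apply]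
    exact Finset.sum_le_sum fun l _ => mul_le_mul_of_nonneg_left (hμy l) (hu l).le
  refine ⟨(hw.2 μ hμ).trans hle, fun he => ?_⟩
  have hμw : dt u μ = dt u w := le_antisymm (hle.trans he.le) (hw.2 μ hμ)
  have hyμ : y = emb μ := by
    have hsum : ∑ l, u l * emb μ l = ∑ l, u l * y l := by
      rw [← lin_apply, ← lin_apply, lin_emb, he, hμw]
    have := (Finset.sum_eq_sum_iff_of_le
      (fun l _ => mul_le_mul_of_nonneg_left (hμy l) (hu l).le)).1 hsum
    ext l
    exact (mul_left_cancel₀ (hu l).ne' (this l (Finset.mem_univ l))).symm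
  rw [hyμ]
  exact subset_convexHull ℝ _ ⟨μ, ⟨hμ, fun b hb => hμw ▸ hw.2 b hb⟩, rfl⟩

lemma Gen.ell_eq (hG : Gen f M) {u : Fin 3 → ℝ} (hu : ∀ l, 0 < u l) {w : Fin 3 → ℕ}
    (hw : w ∈ mnSet M u) : ell u (NDiag f) = dt u w := by
  refine IsLeast.csInf_eq ⟨⟨emb w, hG.emb_mem hw.1, rfl⟩, ?_⟩
  rintro _ ⟨x, hx, rfl⟩
  have := (hG.face_aux hu hw hx).1
  rwa [lin_apply] at this

lemma Gen.emb_mem_face (hG : Gen f M) {u : Fin 3 → ℝ} (hu : ∀ l, 0 < u l) {a : Fin 3 → ℕ}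
    (ha : a ∈ M) : emb a ∈ faceOf u (NDiag f) ↔ a ∈ mnSet M u := by
  obtain ⟨w, hw⟩ := mnSet_nonempty hG.fin hG.ne u
  have h1 : emb a ∈ faceOf u (NDiag f) ↔ emb a ∈ NDiag f ∧ dt u a = dt u w := by
    rw [← hG.ell_eq hu hw]; rfl
  rw [h1, mem_mnSet_iff hw.2 hw.1 rfl]
  exact ⟨fun h => ⟨ha, h.2⟩, fun h => ⟨hG.emb_mem ha, h.2⟩⟩

lemma Gen.face_eq (hG : Gen f M) {u : Fin 3 → ℝ} (hu : ∀ l, 0 < u l) :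
    faceOf u (NDiag f) = convexHull ℝ (emb '' mnSet M u) := by
  obtain ⟨w, hw⟩ := mnSet_nonempty hG.fin hG.ne u
  apply Set.Subset.antisymm
  · rintro x ⟨hx, hxe⟩
    rw [hG.ell_eq hu hw, ← lin_apply] at hxe
    exact (hG.face_aux hu hw hx).2 hxe
  · refine convexHull_min ?_ ?_
    · rintro _ ⟨a, ha, rfl⟩
      exact (hG.emb_mem_face hu ha.1).2 ha
    · have h1 : faceOf u (NDiag f) = NDiag f ∩ {x | lin u x = ell u (NDiag f)} := by
        ext x; simp [faceOf, lin_apply]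
      rw [h1]
      exact (convex_convexHull ℝ _).inter (convex_hyperplane (lin u).isLinear _)

/-- The `0`-dimensional faces are the exponents that are alone in having least weight for some
positive weight. -/
lemma Gen.vertex_iff (hG : Gen f M) {A : Fin 3 → ℝ} :
    IsCompactFace f {A} ↔ ∃ a ∈ M, A = emb a ∧ ∃ u : Fin 3 → ℝ, (∀ l, 0 < u l) ∧ mnSet M u = {a} := by
  constructor
  · rintro ⟨u, hu, hA⟩
    obtain ⟨a, ha⟩ := mnSet_nonempty hG.fin hG.ne u
    have hmem : ∀ b ∈ mnSet M u, emb b = A := fun b hb => by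
      have := (hG.emb_mem_face hu hb.1).2 hb
      rwa [← hA] at this
    refine ⟨a, ha.1, (hmem a ha).symm, u, hu, ?_⟩
    refine Set.eq_singleton_iff_unique_mem.2 ⟨ha, fun b hb => emb_inj ?_⟩
    rw [hmem b hb, hmem a ha]
  · rintro ⟨a, -, rfl, u, hu, h⟩
    refine ⟨u, hu, ?_⟩
    rw [hG.face_eq hu, h, Set.image_singleton, convexHull_singleton]

/-- An exponent at which some linear form has a strict minimum over a face is a vertex. -/
lemma Gen.vertex_of (hG : Gen f M) {u : Fin 3 → ℝ} (hu : ∀ l, 0 < u l) {a : Fin 3 → ℕ}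
    (ha : a ∈ mnSet M u) (d : Fin 3 → ℝ) (hd : ∀ b ∈ mnSet M u, b ≠ a → dt d a < dt d b) :
    IsCompactFace f {emb a} := by
  obtain ⟨v, hv, h⟩ := perturb hG.fin hu d ha fun b hb => by
    by_cases hba : b = a
    · rw [hba]
    · exact (hd b hb hba).le
  refine hG.vertex_iff.2 ⟨a, ha.1, rfl, v, hv, ?_⟩
  ext b
  rw [h, Set.mem_singleton_iff]
  constructor
  · rintro ⟨hb, he⟩
    by_contra hne
    exact (hd b hb hne).ne' he
  · rintro rfl
    exact ⟨ha, rfl⟩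

/-- A compact face is the convex hull of its vertices (Krein–Milman). -/
lemma Gen.hull_vtx (hG : Gen f M) {u : Fin 3 → ℝ} (hu : ∀ l, 0 < u l) :
    faceOf u (NDiag f) ⊆ convexHull ℝ (vtxOf f (faceOf u (NDiag f))) := by
  have hfinmn : (emb '' mnSet M u).Finite := (hG.fin.subset fun a ha => ha.1).image _
  have hcomp : IsCompact (faceOf u (NDiag f)) := by
    rw [hG.face_eq hu]; exact hfinmn.isCompact_convexHull ℝ
  have hconv : Convex ℝ (faceOf u (NDiag f)) := by
    rw [hG.face_eq hu]; exact convex_convexHull ℝ _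
  have hext : (faceOf u (NDiag f)).extremePoints ℝ ⊆ vtxOf f (faceOf u (NDiag f)) := by
    intro x hx
    have hx' := hx
    rw [hG.face_eq hu] at hx'
    obtain ⟨a, ha, rfl⟩ := extremePoints_convexHull_subset hx'
    refine ⟨?_, hx.1⟩
    have hsep := (hconv.mem_extremePoints_iff_mem_sdiff_convexHull_sdiff.1 hx).2
    have hnot : emb a ∉ convexHull ℝ (emb '' (mnSet M u \ {a})) := fun hmem => by
      refine hsep (convexHull_mono ?_ hmem)
      rintro _ ⟨b, ⟨hb, hba⟩, rfl⟩
      exact ⟨(hG.emb_mem_face hu hb.1).2 hb, fun h => hba (emb_inj h)⟩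
    have hclosed : IsClosed (convexHull ℝ (emb '' (mnSet M u \ {a}))) :=
      (((hG.fin.subset fun a (ha : a ∈ mnSet M u \ {_}) => ha.1.1).image
        emb).isCompact_convexHull ℝ).isClosed
    obtain ⟨φ, s, h1, h2⟩ := geometric_hahn_banach_point_closed (convex_convexHull ℝ _) hclosed hnot
    have hφ : ∀ b, dt (fun l => φ (Pi.single l 1)) b = φ (emb b) := fun b => by
      have := LinearMap.pi_apply_eq_sum_univ (φ : (Fin 3 → ℝ) →ₗ[ℝ] ℝ) (emb b)
      simp only [ContinuousLinearMap.coe_coe, smul_eq_mul] at this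
      rw [this, dt]
      refine Finset.sum_congr rfl fun l _ => ?_
      rw [mul_comm]
      congr 2
      ext k
      simp [Pi.single_apply, eq_comm]
    refine hG.vertex_of hu ha (fun l => φ (Pi.single l 1)) fun b hb hba => ?_
    rw [hφ, hφ]
    exact h1.trans (h2 _ (subset_convexHull ℝ _ ⟨b, ⟨hb, hba⟩, rfl⟩))
  have hfinv : (vtxOf f (faceOf u (NDiag f))).Finite := by
    refine hfinmn.subset ?_
    rintro A ⟨hA, hAS⟩
    obtain ⟨a, ha, rfl, -⟩ := hG.vertex_iff.1 hA
    exact ⟨a, (hG.emb_mem_face hu ha).1 hAS, rfl⟩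
  have h := closure_minimal (convexHull_mono hext) (hfinv.isCompact_convexHull ℝ).isClosed
  rwa [closure_convexHull_extremePoints hcomp hconv] at h

/-! ### Dimensions of faces -/

/-- The direction of a face, spanned by differences of its exponents. -/
def dirOf (M : Set (Fin 3 → ℕ)) (u : Fin 3 → ℝ) : Submodule ℝ (Fin 3 → ℝ) :=
  vectorSpan ℝ (emb '' mnSet M u)

lemma Gen.faceDim_eq (hG : Gen f M) {u : Fin 3 → ℝ} (hu : ∀ l, 0 < u l) :
    faceDim (faceOf u (NDiag f)) = Module.finrank ℝ (dirOf M u) := by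
  rw [faceDim, hG.face_eq hu, affineSpan_convexHull, direction_affineSpan, dirOf]

lemma sub_mem_dirOf {u : Fin 3 → ℝ} {a b : Fin 3 → ℕ} (ha : a ∈ mnSet M u) (hb : b ∈ mnSet M u) :
    emb a - emb b ∈ dirOf M u :=
  vsub_mem_vectorSpan ℝ ⟨a, ha, rfl⟩ ⟨b, hb, rfl⟩

lemma dirOf_le {u : Fin 3 → ℝ} {K : Submodule ℝ (Fin 3 → ℝ)}
    (h : ∀ a ∈ mnSet M u, ∀ b ∈ mnSet M u, emb a - emb b ∈ K) : dirOf M u ≤ K := by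
  rw [dirOf, vectorSpan_def, Submodule.span_le]
  rintro _ ⟨_, ⟨a, ha, rfl⟩, _, ⟨b, hb, rfl⟩, rfl⟩
  exact h a ha b hb

lemma finrank_dirOf_le_one {u : Fin 3 → ℝ} {x : Fin 3 → ℝ}
    (h : ∀ a ∈ mnSet M u, ∀ b ∈ mnSet M u, ∃ c : ℝ, c • x = emb a - emb b) :
    Module.finrank ℝ (dirOf M u) ≤ 1 := by
  have h1 : dirOf M u ≤ Submodule.span ℝ {x} :=
    dirOf_le fun a ha b hb => Submodule.mem_span_singleton.2 (h a ha b hb)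
  exact (Submodule.finrank_mono h1).trans (by
    simpa using finrank_span_le_card (R := ℝ) ({x} : Set (Fin 3 → ℝ)))

lemma one_le_finrank_dirOf {u : Fin 3 → ℝ} {a b : Fin 3 → ℕ} (ha : a ∈ mnSet M u)
    (hb : b ∈ mnSet M u) (hab : a ≠ b) : 1 ≤ Module.finrank ℝ (dirOf M u) := by
  refine Submodule.one_le_finrank_iff.2 fun h => ?_
  have := sub_mem_dirOf ha hb
  rw [h, Submodule.mem_bot, sub_eq_zero] at this
  exact hab (emb_inj this)

lemma lin_sub_eq_zero {u : Fin 3 → ℝ} {a b : Fin 3 → ℕ} (ha : a ∈ mnSet M u)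
    (hb : b ∈ mnSet M u) : lin u (emb a - emb b) = 0 := by
  rw [map_sub, lin_emb, lin_emb, sub_eq_zero]
  exact le_antisymm (ha.2 b hb.1) (hb.2 a ha.1)

/-- A face contained in a coordinate plane has dimension at most one. -/
lemma finrank_plane {u : Fin 3 → ℝ} (hu : ∀ l, 0 < u l) (j : Fin 3)
    (h : ∀ a ∈ mnSet M u, a j = 0) : Module.finrank ℝ (dirOf M u) ≤ 1 := by
  obtain ⟨i, k, hijk⟩ := Tri.exists j
  refine finrank_dirOf_le_one (x := tri i k (u k) (-u i) 0) fun a ha b hb => ?_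
  have h0 := lin_sub_eq_zero ha hb
  have haj := h a ha
  have hbj := h b hb
  rw [lin_apply, hijk.sum] at h0
  simp only [Pi.sub_apply, emb, haj, hbj] at h0
  obtain ⟨h1, h2, h3⟩ := hijk
  have hk := (hu k).ne'
  refine ⟨((a i : ℝ) - b i) / u k, ?_⟩
  ext l
  rcases (Tri.cases ⟨h1, h2, h3⟩ l) with rfl | rfl | rfl
  · simp [tri, h1, h2, emb, haj, hbj]
  · simp [tri, emb, hk]
  · simp only [tri, h3.symm, emb, Pi.smul_apply, Pi.sub_apply, smul_eq_mul, if_true, if_false]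
    field_simp
    simp only [CharP.cast_eq_zero, sub_self, mul_zero, zero_add] at h0
    linarith

/-- A two-dimensional face has an exponent different from any two given ones. -/
lemma exists_third {u : Fin 3 → ℝ} (hdim : Module.finrank ℝ (dirOf M u) = 2) (s t : Fin 3 → ℕ) :
    ∃ a ∈ mnSet M u, a ≠ s ∧ a ≠ t := by
  by_contra hcon
  push Not at hcon
  have hst : ∀ a ∈ mnSet M u, a = s ∨ a = t := fun a ha => by
    by_cases h : a = s
    · exact Or.inl h
    · exact Or.inr (hcon a ha h)
  have := finrank_dirOf_le_one (u := u) (x := emb s - emb t) fun a ha b hb => by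
    rcases hst a ha with rfl | rfl <;> rcases hst b hb with rfl | rfl
    · exact ⟨0, by simp⟩
    · exact ⟨1, by simp⟩
    · exact ⟨-1, by simp⟩
    · exact ⟨0, by simp⟩
  omega

lemma finrank_of_nonCol {u : Fin 3 → ℝ} (hu : ∀ l, 0 < u l) (h : NonCol M u) :
    Module.finrank ℝ (dirOf M u) = 2 := by
  obtain ⟨A, hA, B, hB, C, hC, hAB, d, e, hdA, hdB, hdC⟩ := h
  apply le_antisymm
  · have hlt : dirOf M u < ⊤ := by
      have hle : dirOf M u ≤ LinearMap.ker (lin u) := dirOf_le fun a ha b hb =>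
        LinearMap.mem_ker.2 (lin_sub_eq_zero ha hb)
      refine lt_of_le_of_lt hle (lt_top_iff_ne_top.2 fun ht => ?_)
      have : Pi.single (0 : Fin 3) (1 : ℝ) ∈ LinearMap.ker (lin u) := by rw [ht]; trivial
      rw [LinearMap.mem_ker, lin_apply] at this
      simp [Pi.single_apply] at this
      exact (hu 0).ne' this
    have := Submodule.finrank_lt hlt.ne
    simp only [Module.finrank_fintype_fun_eq_card, Fintype.card_fin] at this
    omega
  · by_contra hcon
    obtain ⟨⟨v, hv⟩, hspan⟩ := finrank_le_one_iff.1
      (show Module.finrank ℝ (dirOf M u) ≤ 1 by omega)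
    obtain ⟨c₁, h1⟩ := hspan ⟨_, sub_mem_dirOf hA hB⟩
    obtain ⟨c₂, h2⟩ := hspan ⟨_, sub_mem_dirOf hC hB⟩
    have h1' : c₁ • v = emb A - emb B := congrArg Subtype.val h1
    have h2' : c₂ • v = emb C - emb B := congrArg Subtype.val h2
    have hc₁ : c₁ ≠ 0 := by
      rintro rfl
      rw [zero_smul, eq_comm, sub_eq_zero] at h1'
      exact hAB (emb_inj h1')
    have h3 := congrArg (lin d) h1'
    have h4 := congrArg (lin d) h2'
    rw [map_smul, map_sub, lin_emb, lin_emb, hdA, hdB, sub_self, smul_eq_mul, mul_eq_zero] at h3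
    rw [map_smul, map_sub, lin_emb, lin_emb, hdB, h3.resolve_left hc₁, smul_zero] at h4
    exact hdC (by linarith)

/-! ### Exceptional faces in terms of exponents -/

lemma distAxis_emb {i j k : Fin 3} (h : Tri i j k) (a : Fin 3 → ℕ) :
    distAxis i (emb a) = 1 ↔ a j ^ 2 + a k ^ 2 = 1 := by
  have hu : Finset.univ.erase i = {j, k} := by
    obtain ⟨h1, h2, h3⟩ := h
    ext l
    simp only [Finset.mem_erase, Finset.mem_univ, and_true, Finset.mem_insert,
      Finset.mem_singleton]
    omega
  rw [distAxis, Real.sqrt_eq_one, hu, Finset.sum_pair h.2.2]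
  simp only [emb]
  exact_mod_cast Iff.rfl

/-- A point of the hull of `W` and points with vanishing `j`-th coordinate, where `W j = 1`. -/
lemma cone_aux {j : Fin 3} {W : Fin 3 → ℝ} (hW : W j = 1) {Y : Set (Fin 3 → ℝ)}
    (hY : ∀ y ∈ Y, y ≠ W → y j = 0) {x : Fin 3 → ℝ} (hx : x ∈ convexHull ℝ Y) :
    x j ≤ 1 ∧ (x j = 1 → x = W) := by
  have hconv : Convex ℝ {x : Fin 3 → ℝ | x j ≤ 1 ∧ (x j = 1 → x = W)} := by
    rintro x ⟨hx1, hx2⟩ y ⟨hy1, hy2⟩ a b ha hb hab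
    have h1 := mul_le_mul_of_nonneg_left hx1 ha
    have h2 := mul_le_mul_of_nonneg_left hy1 hb
    have hl : (a • x + b • y) j = a * x j + b * y j := by simp
    refine ⟨by rw [hl]; linarith, fun he => ?_⟩
    rw [hl] at he
    rcases ha.eq_or_lt with rfl | ha'
    · have hb1 : b = 1 := by linarith
      subst hb1
      simpa using hy2 (by linarith)
    rcases hb.eq_or_lt with rfl | hb'
    · have ha1 : a = 1 := by linarith
      subst ha1
      simpa using hx2 (by linarith)
    · rw [hx2 (mul_left_cancel₀ ha'.ne' (by linarith)),
        hy2 (mul_left_cancel₀ hb'.ne' (by linarith)), ← add_smul, hab, one_smul]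
  refine convexHull_min (fun y hy => ?_) hconv hx
  by_cases h : y = W
  · subst h; exact ⟨hW.le, fun _ => rfl⟩
  · rw [Set.mem_ofPred_eq, hY y hy h]
    exact ⟨zero_le_one, fun h => by norm_num at h⟩

lemma Gen.cexc_of_mem_Ef (hG : Gen f M) {u : Fin 3 → ℝ} (hu : ∀ l, 0 < u l)
    (hE : faceOf u (NDiag f) ∈ Ef f) : CExc M u := by
  obtain ⟨⟨-, hdim⟩, i, W, hW, hdist, T, -, ⟨j, hji, hTj⟩, hvtx⟩ := hE
  rw [hG.faceDim_eq hu] at hdim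
  obtain ⟨w, hwM, rfl, -⟩ := hG.vertex_iff.1 hW.1
  have hw := (hG.emb_mem_face hu hwM).1 hW.2
  obtain ⟨k, hijk⟩ : ∃ k, Tri i j k := by
    have : ∀ i j : Fin 3, j ≠ i → ∃ k, i ≠ j ∧ i ≠ k ∧ j ≠ k := by decide
    exact this i j hji
  rw [distAxis_emb hijk] at hdist
  have hY : ∀ y ∈ vtxOf f (faceOf u (NDiag f)), y ≠ emb w → y j = 0 := fun y hy hne => by
    have : y ∈ vtxOf f T := by rw [hvtx]; exact ⟨hy, hne⟩
    exact hTj this.2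
  have hmem : ∀ a ∈ mnSet M u, emb a ∈ convexHull ℝ (vtxOf f (faceOf u (NDiag f))) :=
    fun a ha => hG.hull_vtx hu ((hG.emb_mem_face hu ha.1).2 ha)
  have hwj : w j ≠ 0 := fun h0 => by
    have := finrank_plane hu j (M := M) fun a ha => by
      have h1 : convexHull ℝ (vtxOf f (faceOf u (NDiag f))) ⊆ {x | x j = 0} := by
        refine convexHull_min (fun y hy => ?_)
          (convex_hyperplane (LinearMap.proj (R := ℝ) (φ := fun _ : Fin 3 => ℝ) j).isLinear 0)
        by_cases hyw : y = emb w
        · subst hyw; simp [emb, h0]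
        · exact hY y hy hyw
      have h2 := h1 (hmem a ha)
      simpa [emb] using h2
    omega
  have hwj1 : w j = 1 := by nlinarith [Nat.one_le_iff_ne_zero.2 hwj]
  have hwk : w k = 0 := by
    rw [hwj1] at hdist
    have : w k ^ 2 = 0 := by omega
    exact pow_eq_zero_iff two_ne_zero |>.1 this
  refine ⟨i, j, k, hijk, w, hw, hwj1, hwk, fun a ha hne => ?_⟩
  obtain ⟨h1, h2⟩ := cone_aux (W := emb w) (by simp [emb, hwj1]) hY (hmem a ha)
  have h1' : a j ≤ 1 := by simpa [emb] using h1
  by_contra h0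
  have h3 : a j = 1 := by omega
  exact hne (emb_inj (h2 (by simp [emb, h3])))

lemma Gen.mem_Ef_of_cexc (hG : Gen f M) {u : Fin 3 → ℝ} (hu : ∀ l, 0 < u l)
    (hS : faceOf u (NDiag f) ∈ GammaK f 2) (hE : CExc M u) : faceOf u (NDiag f) ∈ Ef f := by
  obtain ⟨i, j, k, hijk, C, hC, hCj, hCk, hall⟩ := hE
  have hdim := hS.2
  rw [hG.faceDim_eq hu] at hdim
  obtain ⟨P, hP, hPC, -⟩ := exists_third hdim C C
  obtain ⟨Q, hQ, hQC, hQP⟩ := exists_third hdim C P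
  have hPj := hall P hP hPC
  obtain ⟨v, hv, hmn⟩ := perturb hG.fin hu (Pi.single j 1) hP fun b _ => by
    rw [dt_single, dt_single, hPj]; simp
  simp only [dt_single, hPj, Nat.cast_inj] at hmn
  have hmn' : ∀ a, a ∈ mnSet M v ↔ a ∈ mnSet M u ∧ a ≠ C := fun a => by
    rw [hmn]
    refine and_congr_right fun ha => ⟨?_, hall a ha⟩
    rintro h rfl
    omega
  refine ⟨hS, i, emb C, ⟨?_, (hG.emb_mem_face hu hC.1).2 hC⟩, ?_, faceOf v (NDiag f),
    ⟨⟨v, hv, rfl⟩, ?_⟩, ⟨j, hijk.1.symm, ?_⟩, ?_⟩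
  · refine hG.vertex_of hu hC (-Pi.single j 1) fun b hb hbC => ?_
    have hneg : ∀ a, dt (-Pi.single j 1) a = -(a j : ℝ) := fun a => by
      rw [← dt_single j a, ← lin_emb, ← lin_emb, lin_apply, lin_apply]; simp
    rw [hneg, hneg, hall b hb hbC, hCj]
    norm_num
  · rw [distAxis_emb hijk, hCj, hCk]; norm_num
  · rw [hG.faceDim_eq hv]
    exact le_antisymm (finrank_plane hv j fun a ha => ((hmn a).1 ha).2)
      (one_le_finrank_dirOf ((hmn' P).2 ⟨hP, hPC⟩) ((hmn' Q).2 ⟨hQ, hQC⟩) hQP.symm)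
  · rw [hG.face_eq hv]
    refine convexHull_min ?_
      (convex_hyperplane (LinearMap.proj (R := ℝ) (φ := fun _ : Fin 3 => ℝ) j).isLinear 0)
    rintro _ ⟨a, ha, rfl⟩
    simp [emb, ((hmn a).1 ha).2]
  · ext A
    constructor
    · rintro ⟨hA, hAT⟩
      obtain ⟨a, ha, rfl, -⟩ := hG.vertex_iff.1 hA
      have := (hmn' a).1 ((hG.emb_mem_face hv ha).1 hAT)
      exact ⟨⟨hA, (hG.emb_mem_face hu ha).2 this.1⟩, fun h => this.2 (emb_inj h)⟩
    · rintro ⟨⟨hA, hAS⟩, hne⟩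
      obtain ⟨a, ha, rfl, -⟩ := hG.vertex_iff.1 hA
      refine ⟨hA, (hG.emb_mem_face hv ha).2 ((hmn' a).2 ⟨(hG.emb_mem_face hu ha).1 hAS, ?_⟩)⟩
      rintro rfl
      exact hne rfl

lemma Gen.wit (hG : Gen f M) {u : Fin 3 → ℝ} (hu : ∀ l, 0 < u l)
    (hS : faceOf u (NDiag f) ∈ GammaK f 2 \ Ef f) : Wit M u where
  pos := hu
  nexc h := hS.2 (hG.mem_Ef_of_cexc hu hS.1 h)
  flat j := by
    by_contra hcon
    push Not at hcon
    have h1 := finrank_plane hu j hcon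
    have h2 := hS.1.2
    rw [hG.faceDim_eq hu] at h2
    omega

/-- The combinatorial conclusion, translated back to faces of the Newton boundary. -/
lemma Gen.of_goal (hG : Gen f M) {i : Fin 3} (h : Goal M i) :
    ∃ S ∈ GammaK f 2 \ Ef f,
      (∃ W ∈ vtxOf f S, ∀ j, j ≠ i → W j = 0) ∨
      (∃ j k, j ≠ i ∧ k ≠ i ∧ j ≠ k ∧
        ∃ W ∈ vtxOf f S, ∃ Y ∈ vtxOf f S,
          W k = 0 ∧ distAxis i W = 1 ∧ Y j = 0 ∧
          segment ℝ W Y ∈ GammaK f 1 ∧ segment ℝ W Y ⊆ S) := by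
  obtain ⟨u, hu, hnexc, hnc, hgoal⟩ := h
  refine ⟨faceOf u (NDiag f), ⟨⟨⟨u, hu, rfl⟩, ?_⟩, fun hE => hnexc (hG.cexc_of_mem_Ef hu hE)⟩, ?_⟩
  · rw [hG.faceDim_eq hu, finrank_of_nonCol hu hnc]
  rcases hgoal with ⟨W, hW, hWax⟩ | ⟨j, k, hijk, W, hW, Y, hY, hWj, hWk, hYj, hYk, v, hv, hmn⟩
  · left
    refine ⟨emb W, ⟨?_, (hG.emb_mem_face hu hW.1).2 hW⟩, fun j hj => by simp [emb, hWax j hj]⟩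
    obtain ⟨j, k, hijk⟩ := Tri.exists i
    have hWj := hWax j hijk.1.symm
    have hWk := hWax k hijk.2.1.symm
    refine hG.vertex_of hu hW (tri i j 0 1 1) fun b hb hbW => ?_
    rw [dt_tri hijk, dt_tri hijk]
    simp only [lf, hWj, hWk]
    have hpos : b j + b k ≠ 0 := fun h0 => by
      have h1 := le_antisymm (hW.2 b hb.1) (hb.2 W hW.1)
      rw [dt_eq_lf hijk, dt_eq_lf hijk] at h1
      have hbj : b j = 0 := by omega
      have hbk : b k = 0 := by omega
      simp only [lf, hWj, hWk, hbj, hbk] at h1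
      have h2 : (W i : ℝ) = b i := mul_left_cancel₀ (hu i).ne' (by linarith)
      refine hbW (funext fun l => ?_)
      rcases hijk.cases l with rfl | rfl | rfl
      · exact_mod_cast h2.symm
      · rw [hbj, hWj]
      · rw [hbk, hWk]
    have : (0 : ℝ) < b j + b k := by exact_mod_cast Nat.pos_of_ne_zero hpos
    push_cast
    linarith
  · right
    have hWv : W ∈ mnSet M v := by rw [hmn]; simp
    have hYv : Y ∈ mnSet M v := by rw [hmn]; simp
    have hWY : W ≠ Y := by rintro rfl; omega
    have hface : segment ℝ (emb W) (emb Y) = faceOf v (NDiag f) := by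
      rw [hG.face_eq hv, hmn, Set.image_pair, convexHull_pair]
    refine ⟨j, k, hijk.1.symm, hijk.2.1.symm, hijk.2.2, emb W,
      ⟨?_, (hG.emb_mem_face hu hW.1).2 hW⟩, emb Y, ⟨?_, (hG.emb_mem_face hu hY.1).2 hY⟩,
      by simp [emb, hWk], ?_, by simp [emb, hYj], ⟨⟨v, hv, hface⟩, ?_⟩, ?_⟩
    · refine hG.vertex_of hv hWv (Pi.single k 1) fun b hb hbW => ?_
      rw [hmn] at hb
      obtain rfl : b = Y := hb.resolve_left hbW
      rw [dt_single, dt_single, hWk]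
      exact_mod_cast hYk
    · refine hG.vertex_of hv hYv (Pi.single j 1) fun b hb hbY => ?_
      rw [hmn] at hb
      obtain rfl : b = W := hb.resolve_right hbY
      rw [dt_single, dt_single, hYj, hWj]
      norm_num
    · rw [distAxis_emb hijk, hWj, hWk]; norm_num
    · rw [hface, hG.faceDim_eq hv]
      refine le_antisymm (finrank_dirOf_le_one (x := emb W - emb Y) fun a ha b hb => ?_)
        (one_le_finrank_dirOf hWv hYv hWY)
      rw [hmn] at ha hb
      rcases ha with rfl | rfl <;> rcases hb with rfl | rfl
      · exact ⟨0, by simp⟩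
      · exact ⟨1, by simp⟩
      · exact ⟨-1, by simp⟩
      · exact ⟨0, by simp⟩
    · have hconv : Convex ℝ (faceOf u (NDiag f)) := by
        rw [hG.face_eq hu]; exact convex_convexHull ℝ _
      exact hconv.segment_subset ((hG.emb_mem_face hu hW.1).2 hW) ((hG.emb_mem_face hu hY.1).2 hY)

end Faces

/-! ### Iterated partial derivatives of analytic functions -/

section Analytic

variable {U : Set (Fin 3 → ℂ)} {F G : (Fin 3 → ℂ) → ℂ}

lemma pder_analytic (hF : AnalyticOnNhd ℂ F U) (i : Fin 3) : AnalyticOnNhd ℂ (pder i F) U :=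
  fun z hz => ((ContinuousLinearMap.apply ℂ ℂ (Pi.single i 1 : Fin 3 → ℂ)).analyticAt _).comp
    (hF.fderiv z hz)

lemma iter_analytic (hF : AnalyticOnNhd ℂ F U) (i : Fin 3) (n : ℕ) :
    AnalyticOnNhd ℂ ((pder i)^[n] F) U := by
  induction n generalizing F with
  | zero => exact hF
  | succ n ih => exact ih (pder_analytic hF i)

lemma pder_congr (hU : IsOpen U) (h : Set.EqOn F G U) (i : Fin 3) :
    Set.EqOn (pder i F) (pder i G) U := fun z hz => by
  have : F =ᶠ[𝓝 z] G := Filter.eventuallyEq_of_mem (hU.mem_nhds hz) h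
  simp only [pder, this.fderiv_eq]

lemma iter_congr (hU : IsOpen U) (h : Set.EqOn F G U) (i : Fin 3) (n : ℕ) :
    Set.EqOn ((pder i)^[n] F) ((pder i)^[n] G) U := by
  induction n generalizing F G with
  | zero => exact h
  | succ n ih => exact ih (pder_congr hU h i)

lemma pder_comm (hF : AnalyticOnNhd ℂ F U) (i j : Fin 3) :
    Set.EqOn (pder i (pder j F)) (pder j (pder i F)) U := fun z hz => by
  have hsymm : IsSymmSndFDerivAt ℂ F z := (hF z hz).contDiffAt.isSymmSndFDerivAt_of_omega
  have hd : DifferentiableAt ℂ (fderiv ℂ F) z := (hF.fderiv z hz).differentiableAt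
  have h : ∀ v w : Fin 3 → ℂ, fderiv ℂ (fun y => fderiv ℂ F y v) z w =
      fderiv ℂ (fderiv ℂ F) z w v := fun v w => by
    rw [fderiv_clm_apply hd (differentiableAt_const v)]
    simp
  exact (h _ _).trans ((hsymm _ _).trans (h _ _).symm)

lemma iter_pder_comm (hU : IsOpen U) (hF : AnalyticOnNhd ℂ F U) (i j : Fin 3) (n : ℕ) :
    Set.EqOn ((pder i)^[n] (pder j F)) (pder j ((pder i)^[n] F)) U := by
  induction n generalizing F with
  | zero => exact fun _ _ => rfl
  | succ n ih =>
    exact (iter_congr hU (pder_comm hF i j) i n).trans (ih (pder_analytic hF i))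

lemma iter_comm (hU : IsOpen U) (hF : AnalyticOnNhd ℂ F U) (i j : Fin 3) (m n : ℕ) :
    Set.EqOn ((pder i)^[m] ((pder j)^[n] F)) ((pder j)^[n] ((pder i)^[m] F)) U := by
  induction n generalizing F with
  | zero => exact fun _ _ => rfl
  | succ n ih =>
    exact (ih (pder_analytic hF j)).trans (iter_congr hU (iter_pder_comm hU hF i j m) j n)

lemma mder_eq (ν : Fin 3 → ℕ) (F : (Fin 3 → ℂ) → ℂ) :
    mder ν F = (pder 0)^[ν 0] ((pder 1)^[ν 1] ((pder 2)^[ν 2] F)) := by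
  simp [mder, List.finRange_succ]

/-- The iterated derivative may be computed in any order of the variables. -/
lemma mder_tri (hU : IsOpen U) (hF : AnalyticOnNhd ℂ F U) {i j k : Fin 3} (h : Tri i j k)
    (ν : Fin 3 → ℕ) :
    Set.EqOn (mder ν F) ((pder i)^[ν i] ((pder j)^[ν j] ((pder k)^[ν k] F))) U := by
  have swap12 : ∀ a b c : Fin 3, Set.EqOn ((pder a)^[ν a] ((pder b)^[ν b] ((pder c)^[ν c] F)))
      ((pder b)^[ν b] ((pder a)^[ν a] ((pder c)^[ν c] F))) U := fun a b c =>
    iter_comm hU (iter_analytic hF c _) a b _ _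
  have swap23 : ∀ a b c : Fin 3, Set.EqOn ((pder a)^[ν a] ((pder b)^[ν b] ((pder c)^[ν c] F)))
      ((pder a)^[ν a] ((pder c)^[ν c] ((pder b)^[ν b] F))) U := fun a b c =>
    iter_congr hU (iter_comm hU hF b c _ _) a _
  rw [mder_eq]
  have hperm : (i = 0 ∧ j = 1 ∧ k = 2) ∨ (i = 0 ∧ j = 2 ∧ k = 1) ∨ (i = 1 ∧ j = 0 ∧ k = 2) ∨
      (i = 1 ∧ j = 2 ∧ k = 0) ∨ (i = 2 ∧ j = 0 ∧ k = 1) ∨ (i = 2 ∧ j = 1 ∧ k = 0) := by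
    obtain ⟨h1, h2, h3⟩ := h
    omega
  rcases hperm with ⟨rfl, rfl, rfl⟩ | ⟨rfl, rfl, rfl⟩ | ⟨rfl, rfl, rfl⟩ | ⟨rfl, rfl, rfl⟩ |
    ⟨rfl, rfl, rfl⟩ | ⟨rfl, rfl, rfl⟩
  · exact fun _ _ => rfl
  · exact swap23 0 1 2
  · exact swap12 0 1 2
  · exact (swap12 0 1 2).trans (swap23 1 0 2)
  · exact (swap23 0 1 2).trans (swap12 0 2 1)
  · exact ((swap12 0 1 2).trans (swap23 1 0 2)).trans (swap12 1 2 0)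

/-- Vanishing of all mixed derivatives, phrased through the Newton support. -/
lemma iter_eq_zero_of_notMem (hU : IsOpen U) (hF : AnalyticOnNhd ℂ F U) (h0 : (0 : Fin 3 → ℂ) ∈ U)
    {i j k : Fin 3} (h : Tri i j k) (a b c : ℕ)
    (hν : ∀ ν ∈ NSupp F, ν i = a → ν j = b → ν k = c → False) :
    (pder i)^[a] ((pder j)^[b] ((pder k)^[c] F)) 0 = 0 := by
  by_contra hne
  obtain ⟨h1, h2, h3⟩ := h
  have h1' := h1.symm
  have h2' := h2.symm
  have h3' := h3.symm
  obtain ⟨ν, hi, hj, hk⟩ : ∃ ν : Fin 3 → ℕ, ν i = a ∧ ν j = b ∧ ν k = c :=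
    ⟨fun l => if l = i then a else if l = j then b else c, by simp, by simp [h1'],
      by simp [h2', h3']⟩
  refine hν ν ?_ hi hj hk
  have := mder_tri hU hF ⟨h1, h2, h3⟩ ν h0
  rw [hi, hj, hk] at this
  rw [← this] at hne
  exact hne

/-- The identity theorem along a line parallel to a coordinate axis. -/
lemma eq_zero_of_iter (hU : IsOpen U) (hc : Convex ℝ U) (hF : AnalyticOnNhd ℂ F U) (i : Fin 3)
    {p : Fin 3 → ℂ} (hp : p ∈ U) (h : ∀ m, (pder i)^[m] F p = 0) (t : ℂ)
    (ht : p + t • Pi.single i 1 ∈ U) : F (p + t • Pi.single i 1) = 0 := by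
  obtain ⟨c, hcdef⟩ : ∃ c : ℂ → Fin 3 → ℂ, c = fun s => p + s • Pi.single i 1 := ⟨_, rfl⟩
  have hcd : ∀ s, HasDerivAt c (Pi.single i 1) s := fun s => by
    have h1 := ((hasDerivAt_id s).smul_const (Pi.single i 1 : Fin 3 → ℂ)).const_add p
    rw [one_smul] at h1
    rw [hcdef]
    exact h1
  have hcan : AnalyticOnNhd ℂ c Set.univ := fun s _ => by
    rw [hcdef]; fun_prop
  have hccont : Continuous c := continuous_iff_continuousAt.2 fun s => (hcd s).continuousAt
  set V : Set ℂ := c ⁻¹' U with hV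
  have hVo : IsOpen V := hU.preimage hccont
  have hVc : Convex ℝ V := by
    intro x hx y hy a b ha hb hab
    have h1 := hc hx hy ha hb hab
    have h2 : c (a • x + b • y) = a • c x + b • c y := by
      rw [hcdef]
      ext l
      have hab' : (a : ℂ) + b = 1 := by exact_mod_cast hab
      simp only [Pi.add_apply, Pi.smul_apply, Complex.real_smul, smul_eq_mul]
      linear_combination (-(p l)) * hab'
    rw [hV, Set.mem_preimage, h2]
    exact h1
  have hFV : ∀ {H : (Fin 3 → ℂ) → ℂ}, AnalyticOnNhd ℂ H U → AnalyticOnNhd ℂ (H ∘ c) V :=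
    fun hH => hH.comp (hcan.mono (Set.subset_univ _)) fun s hs => hs
  have hderiv : ∀ {H : (Fin 3 → ℂ) → ℂ}, AnalyticOnNhd ℂ H U → ∀ s ∈ V,
      deriv (H ∘ c) s = (pder i H ∘ c) s := fun hH s hs =>
    ((hH (c s) hs).differentiableAt.hasFDerivAt.comp_hasDerivAt s (hcd s)).deriv
  have hiter : ∀ m, Set.EqOn (iteratedDeriv m (F ∘ c)) ((pder i)^[m] F ∘ c) V := by
    intro m
    induction m with
    | zero => intro s _; simp
    | succ m ih =>
      intro s hs
      have h1 : iteratedDeriv m (F ∘ c) =ᶠ[𝓝 s] (pder i)^[m] F ∘ c :=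
        Filter.eventuallyEq_of_mem (hVo.mem_nhds hs) ih
      rw [iteratedDeriv_succ, h1.deriv_eq, hderiv (iter_analytic hF i m) s hs,
        Function.iterate_succ_apply']
  have hc0 : c 0 = p := by rw [hcdef]; simp
  have h0V : (0 : ℂ) ∈ V := by rw [hV, Set.mem_preimage, hc0]; exact hp
  have hev : ∀ᶠ s in 𝓝 (0 : ℂ), (F ∘ c) s = 0 := by
    rw [← analyticOrderAt_eq_top, ENat.eq_top_iff_forall_ge]
    intro m
    rw [natCast_le_analyticOrderAt_iff_iteratedDeriv_eq_zero (hFV hF 0 h0V)]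
    intro l _
    rw [hiter l h0V, Function.comp_apply, hc0, h l]
  have := (hFV hF).eqOn_zero_of_preconnected_of_eventuallyEq_zero hVc.isPreconnected h0V hev
    (show t ∈ V by rw [hV, Set.mem_preimage, hcdef]; exact ht)
  rw [hcdef] at this
  exact this

end Analytic

/-- A holomorphic function of two variables has no isolated zeros: otherwise its modulus would be
bounded below, by the minimum modulus principle, on the discs `{|t| ≤ R} × {s}` with `s ≠ 0`. -/
lemma exists_zero_two_var {r : ℝ} (hr : 0 < r) {G : ℂ → ℂ → ℂ}
    (hG : ∀ t s : ℂ, ‖t‖ < r → ‖s‖ < r → DifferentiableAt ℂ (Function.uncurry G) (t, s))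
    (h0 : G 0 0 = 0) : ∃ t s : ℂ, ‖t‖ < r ∧ ‖s‖ < r ∧ (t ≠ 0 ∨ s ≠ 0) ∧ G t s = 0 := by
  by_contra hcon
  push Not at hcon
  obtain ⟨R, hR0, hRr⟩ := exists_between hr
  have hne : (Metric.sphere (0 : ℂ) R ×ˢ Metric.closedBall (0 : ℂ) R).Nonempty :=
    (NormedSpace.sphere_nonempty.2 hR0.le).prod ⟨0, by simp [hR0.le]⟩
  have hcomp : IsCompact (Metric.sphere (0 : ℂ) R ×ˢ Metric.closedBall (0 : ℂ) R) :=
    (isCompact_sphere _ _).prod (isCompact_closedBall _ _)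
  have hcont : ContinuousOn (fun q : ℂ × ℂ => ‖G q.1 q.2‖)
      (Metric.sphere (0 : ℂ) R ×ˢ Metric.closedBall (0 : ℂ) R) := by
    rintro ⟨t, s⟩ ⟨ht, hs⟩
    rw [mem_sphere_zero_iff_norm] at ht
    rw [mem_closedBall_zero_iff] at hs
    exact (hG t s (by linarith) (by linarith)).continuousAt.norm.continuousWithinAt
  obtain ⟨⟨t₀, s₀⟩, ⟨ht₀, hs₀⟩, hmin⟩ := hcomp.exists_isMinOn hne hcont
  rw [mem_sphere_zero_iff_norm] at ht₀
  rw [mem_closedBall_zero_iff] at hs₀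
  have hm : 0 < ‖G t₀ s₀‖ := norm_pos_iff.2 (hcon t₀ s₀ (by linarith) (by linarith)
    (Or.inl fun h => by rw [h, norm_zero] at ht₀; linarith))
  have hbound : ∀ s : ℂ, ‖s‖ < R → s ≠ 0 → ‖G t₀ s₀‖ ≤ ‖G 0 s‖ := by
    intro s hs hs0
    have hne : ∀ t : ℂ, ‖t‖ < r → G t s ≠ 0 := fun t ht =>
      hcon t s ht (by linarith) (Or.inr hs0)
    have hdiff : DifferentiableOn ℂ (fun t => (G t s)⁻¹) (Metric.ball 0 r) := fun t ht => by
      rw [mem_ball_zero_iff] at ht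
      have h1 : DifferentiableAt ℂ (fun t : ℂ => (t, s)) t := by fun_prop
      have h2 : DifferentiableAt ℂ (fun t => G t s) t :=
        DifferentiableAt.comp (g := Function.uncurry G) (f := fun t : ℂ => (t, s)) t
          (hG t s ht (by linarith)) h1
      exact (h2.inv (hne t ht)).differentiableWithinAt
    have hle := Complex.norm_le_of_forall_mem_frontier_norm_le (U := Metric.ball (0 : ℂ) R)
      Metric.isBounded_ball (hdiff.diffContOnCl_ball (Metric.closedBall_subset_ball hRr))
      (C := ‖G t₀ s₀‖⁻¹) (fun z hz => ?_) (z := 0) (subset_closure (Metric.mem_ball_self hR0))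
    · rw [norm_inv] at hle
      exact (inv_le_inv₀ (norm_pos_iff.2 (hne 0 (by simpa using hr))) hm).1 hle
    · rw [frontier_ball _ hR0.ne'] at hz
      rw [norm_inv]
      refine inv_anti₀ hm ?_
      exact hmin (Set.mk_mem_prod hz (by simpa using hs.le))
  have hc0 : ContinuousAt (fun s => ‖G 0 s‖) 0 := by
    have h1 : ContinuousAt (fun s : ℂ => ((0 : ℂ), s)) 0 := by fun_prop
    exact (ContinuousAt.comp (f := fun s : ℂ => ((0 : ℂ), s))
      (hG 0 0 (by simpa using hr) (by simpa using hr)).continuousAt h1).norm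
  have hev : ∀ᶠ s in 𝓝[≠] (0 : ℂ), ‖G t₀ s₀‖ ≤ ‖G 0 s‖ := by
    filter_upwards [self_mem_nhdsWithin,
      nhdsWithin_le_nhds (Metric.ball_mem_nhds (0 : ℂ) hR0)] with s hs hsR
    exact hbound s (by simpa using hsR) hs
  have hlim := ge_of_tendsto (hc0.tendsto.mono_left nhdsWithin_le_nhds) hev
  simp only [h0, norm_zero] at hlim
  linarith

/-! ### The Newton support of an isolated singularity -/

/-- An isolated singularity has an exponent on the axis `OX_i` or next to it; otherwise all
partial derivatives vanish along this axis. -/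
lemma exists_near_axis {f : (Fin 3 → ℂ) → ℂ} {r : ℝ} (hr : 0 < r)
    (han : AnalyticOnNhd ℂ f (Metric.ball 0 r))
    (hiso : ∀ z : Fin 3 → ℂ, ‖z‖ < r → z ≠ 0 → ∃ i, pder i f z ≠ 0) {i j k : Fin 3}
    (h : Tri i j k) : ∃ ν ∈ NSupp f, ν j + ν k ≤ 1 := by
  by_contra hcon
  push Not at hcon
  have hU : IsOpen (Metric.ball (0 : Fin 3 → ℂ) r) := Metric.isOpen_ball
  have h0 : (0 : Fin 3 → ℂ) ∈ Metric.ball (0 : Fin 3 → ℂ) r := Metric.mem_ball_self hr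
  have hz : ∀ a b c, b + c ≤ 1 → (pder i)^[a] ((pder j)^[b] ((pder k)^[c] f)) 0 = 0 :=
    fun a b c hbc => iter_eq_zero_of_notMem hU han h0 h a b c fun ν hν _ hb hc => by
      have := hcon ν hν
      omega
  obtain ⟨R, hR0, hRr⟩ := exists_between hr
  set z : Fin 3 → ℂ := 0 + (R : ℂ) • Pi.single i 1 with hzdef
  have hzi : z i = R := by simp [hzdef]
  have hzn : ‖z‖ < r := by
    rw [pi_norm_lt_iff hr]
    intro l
    by_cases hl : l = i
    · subst hl
      rw [hzi, Complex.norm_real, Real.norm_of_nonneg hR0.le]; exact hRr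
    · simpa [hzdef, Pi.single_apply, hl] using hr
  have hz0 : z ≠ 0 := fun he => by
    rw [he, Pi.zero_apply] at hzi
    exact hR0.ne (by exact_mod_cast hzi)
  obtain ⟨l, hl⟩ := hiso z hzn hz0
  refine hl (eq_zero_of_iter hU (convex_ball _ _) (pder_analytic han l) i h0 (fun m => ?_) _
    (mem_ball_zero_iff.2 hzn))
  rcases h.cases l with rfl | rfl | rfl
  · exact hz (m + 1) 0 0 (by omega)
  · exact hz m 1 0 (by omega)
  · exact hz m 0 1 (by omega)

/-- An isolated singularity has an exponent in the plane `x_j = 0`; otherwise `x_j` divides `f`,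
and the gradient vanishes on the curve `{x_j = ∂f/∂x_j = 0}`. -/
lemma exists_on_plane {f : (Fin 3 → ℂ) → ℂ} {r : ℝ} (hr : 0 < r)
    (han : AnalyticOnNhd ℂ f (Metric.ball 0 r))
    (hiso : ∀ z : Fin 3 → ℂ, ‖z‖ < r → z ≠ 0 → ∃ i, pder i f z ≠ 0)
    (hgrad : ∀ i, pder i f 0 = 0) (j : Fin 3) : ∃ ν ∈ NSupp f, ν j = 0 := by
  by_contra hcon
  push Not at hcon
  obtain ⟨k, l, h⟩ := Tri.exists j
  have hU : IsOpen (Metric.ball (0 : Fin 3 → ℂ) r) := Metric.isOpen_ball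
  have h0 : (0 : Fin 3 → ℂ) ∈ Metric.ball (0 : Fin 3 → ℂ) r := Metric.mem_ball_self hr
  have hz : ∀ a b, (pder k)^[a] ((pder l)^[b] f) 0 = 0 := fun a b =>
    iter_eq_zero_of_notMem hU han h0 h 0 a b fun ν hν ha _ _ => hcon ν hν ha
  -- The point of the plane `x_j = 0` with coordinates `t`, `s`.
  obtain ⟨φ, hφ⟩ : ∃ φ : ℂ → ℂ → Fin 3 → ℂ,
      φ = fun t s => (0 + t • Pi.single k 1) + s • Pi.single l 1 := ⟨_, rfl⟩
  have hφk : ∀ t s, φ t s k = t := fun t s => by simp [hφ, h.2.2]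
  have hφl : ∀ t s, φ t s l = s := fun t s => by simp [hφ, h.2.2.symm]
  have hφj : ∀ t s, φ t s j = 0 := fun t s => by simp [hφ, h.1, h.2.1]
  have hφn : ∀ t s, ‖t‖ < r → ‖s‖ < r → ‖φ t s‖ < r := fun t s ht hs => by
    rw [pi_norm_lt_iff hr]
    intro q
    rcases h.cases q with rfl | rfl | rfl
    · rw [hφj]; simpa using hr
    · rw [hφk]; exact ht
    · rw [hφl]; exact hs
  have hvan : ∀ {F : (Fin 3 → ℂ) → ℂ}, AnalyticOnNhd ℂ F (Metric.ball 0 r) →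
      (∀ a b, (pder k)^[a] ((pder l)^[b] F) 0 = 0) →
      ∀ t s, ‖t‖ < r → ‖s‖ < r → F (φ t s) = 0 := by
    intro F hF hFz t s ht hs
    have hp : ∀ t, (0 : Fin 3 → ℂ) + t • Pi.single k 1 = φ t 0 := fun t => by simp [hφ]
    have hmem : ∀ t s, ‖t‖ < r → ‖s‖ < r → φ t s ∈ Metric.ball (0 : Fin 3 → ℂ) r :=
      fun t s ht hs => by simpa using hφn t s ht hs
    have h1 : ∀ b, (pder l)^[b] F (0 + t • Pi.single k 1) = 0 := fun b =>
      eq_zero_of_iter hU (convex_ball _ _) (iter_analytic hF l b) k h0 (fun a => hFz a b) t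
        (by rw [hp]; exact hmem t 0 ht (by simpa using hr))
    have h2 := eq_zero_of_iter hU (convex_ball _ _) hF l (p := 0 + t • Pi.single k 1)
      (by rw [hp]; exact hmem t 0 ht (by simpa using hr)) h1 s
      (by have := hmem t s ht hs; rw [hφ] at this; exact this)
    rw [hφ]
    exact h2
  have hk : ∀ t s, ‖t‖ < r → ‖s‖ < r → pder k f (φ t s) = 0 :=
    hvan (pder_analytic han k) fun a b => by
      have h1 := iter_congr hU (iter_pder_comm hU han l k b) k a h0
      rw [h1]
      exact hz (a + 1) b
  have hl : ∀ t s, ‖t‖ < r → ‖s‖ < r → pder l f (φ t s) = 0 :=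
    hvan (pder_analytic han l) fun a b => hz a (b + 1)
  obtain ⟨t, s, ht, hs, hts, hzero⟩ := exists_zero_two_var hr (G := fun t s => pder j f (φ t s))
    (fun t s ht hs => by
      have h1 : DifferentiableAt ℂ (fun q : ℂ × ℂ => φ q.1 q.2) (t, s) := by
        rw [hφ]; fun_prop
      have h2 : DifferentiableAt ℂ (pder j f) (φ t s) :=
        (pder_analytic han j _ (by simpa using hφn t s ht hs)).differentiableAt
      exact DifferentiableAt.comp (g := pder j f) (f := fun q : ℂ × ℂ => φ q.1 q.2) (t, s) h2 h1)
    (by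
      have : φ 0 0 = 0 := by simp [hφ]
      simp only [this, hgrad j])
  have hne : φ t s ≠ 0 := fun he => by
    rcases hts with h1 | h1
    · exact h1 (by rw [← hφk t s, he]; rfl)
    · exact h1 (by rw [← hφl t s, he]; rfl)
  obtain ⟨q, hq⟩ := hiso _ (hφn t s ht hs) hne
  rcases h.cases q with rfl | rfl | rfl
  · exact hq hzero
  · exact hq (hk t s ht hs)
  · exact hq (hl t s ht hs)

/-- The minimal exponents of an isolated singularity. -/
lemma exists_cfg {f : (Fin 3 → ℂ) → ℂ} (hf : IsIsolSing f) : ∃ M, Cfg M ∧ Gen f M := by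
  obtain ⟨⟨han, -, hf0, hgrad⟩, ρ, hρ, hiso⟩ := hf
  obtain ⟨r₀, hr₀, han⟩ := han.exists_ball_analyticOnNhd
  obtain ⟨r, hr, hrρ, hrr⟩ : ∃ r > 0, r ≤ ρ ∧ r ≤ r₀ :=
    ⟨min ρ r₀, lt_min hρ hr₀, min_le_left _ _, min_le_right _ _⟩
  replace han := han.mono (Metric.ball_subset_ball hrr)
  replace hiso := fun z (hz : ‖z‖ < r) => hiso z (hz.trans_le hrρ)
  have hdom : ∀ ν ∈ NSupp f, ∃ μ, Minimal (· ∈ NSupp f) μ ∧ ∀ l, μ l ≤ ν l := fun ν hν => by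
    obtain ⟨μ, hμν, hμ⟩ := exists_minimal_le_of_wellFoundedLT (· ∈ NSupp f) ν hν
    exact ⟨μ, hμ, hμν⟩
  have hfin : {ν | Minimal (· ∈ NSupp f) ν}.Finite :=
    WellQuasiOrderedLE.finite_of_isAntichain (setOfPred_minimal_antichain _)
  have haxis : ∀ i, ∃ a, Minimal (· ∈ NSupp f) a ∧
      ∀ j k, i ≠ j → i ≠ k → j ≠ k → a j + a k ≤ 1 := fun i => by
    obtain ⟨j, k, h⟩ := Tri.exists i
    obtain ⟨ν, hν, hν1⟩ := exists_near_axis hr han hiso h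
    obtain ⟨μ, hμ, hμν⟩ := hdom ν hν
    refine ⟨μ, hμ, fun j' k' h1 h2 h3 => ?_⟩
    have hj := hμν j
    have hk := hμν k
    rcases h.cases j' with rfl | rfl | rfl
    · exact absurd rfl h1
    · rcases h.cases k' with rfl | rfl | rfl
      · exact absurd rfl h2
      · exact absurd rfl h3
      · omega
    · rcases h.cases k' with rfl | rfl | rfl
      · exact absurd rfl h2
      · omega
      · exact absurd rfl h3
  refine ⟨{ν | Minimal (· ∈ NSupp f) ν}, ⟨hfin, ?_, ?_, haxis, ?_⟩, ⟨hfin, ?_, ?_, hdom⟩⟩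
  · intro a ha b hb hab
    exact hb.eq_of_le ha.1 hab
  · intro a ha
    by_contra hlt
    refine ha.1 ?_
    rw [mder_eq]
    have h4 : (a 0 = 0 ∧ a 1 = 0 ∧ a 2 = 0) ∨ (a 0 = 1 ∧ a 1 = 0 ∧ a 2 = 0) ∨
        (a 0 = 0 ∧ a 1 = 1 ∧ a 2 = 0) ∨ (a 0 = 0 ∧ a 1 = 0 ∧ a 2 = 1) := by omega
    rcases h4 with ⟨h0, h1, h2⟩ | ⟨h0, h1, h2⟩ | ⟨h0, h1, h2⟩ | ⟨h0, h1, h2⟩ <;> rw [h0, h1, h2]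
    · exact hf0
    · exact hgrad 0
    · exact hgrad 1
    · exact hgrad 2
  · intro j
    obtain ⟨ν, hν, hν0⟩ := exists_on_plane hr han hiso hgrad j
    obtain ⟨μ, hμ, hμν⟩ := hdom ν hν
    exact ⟨μ, hμ, by have := hμν j; omega⟩
  · obtain ⟨a, ha, -⟩ := haxis 0
    exact ⟨a, ha⟩
  · exact fun a ha => ha.1

/-- choice of an unexceptional face: if `Γ²(f) \ E_f ≠ ∅` then for every
axis `OX_i` there is an unexceptional face `S` such that either (i) some vertex of `S`
lies on `OX_i`, or (ii) there are distinct `j, k ≠ i` and vertices `W ∈ OX_iX_j` at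
distance `1` from `OX_i` and `Y ∈ OX_iX_k` with the segment `WY` an edge of `S`. -/
theorem stmt16 (f : (Fin 3 → ℂ) → ℂ) (hf : IsIsolSing f)
    (hne : (GammaK f 2 \ Ef f).Nonempty) :
    ∀ i : Fin 3, ∃ S ∈ GammaK f 2 \ Ef f,
      (∃ W ∈ vtxOf f S, ∀ j, j ≠ i → W j = 0) ∨
      (∃ j k, j ≠ i ∧ k ≠ i ∧ j ≠ k ∧
        ∃ W ∈ vtxOf f S, ∃ Y ∈ vtxOf f S,
          W k = 0 ∧ distAxis i W = 1 ∧ Y j = 0 ∧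
          segment ℝ W Y ∈ GammaK f 1 ∧ segment ℝ W Y ⊆ S) := by
  intro i
  obtain ⟨M, hM, hG⟩ := exists_cfg hf
  obtain ⟨S, hS⟩ := hne
  obtain ⟨u, hu, rfl⟩ := hS.1.1
  exact hG.of_goal (goal_of_cfg hM (hG.wit hu hS) i)
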